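/- arXiv:2206.02863 — 2 statements merged into one kernel-verified Lean document; each statement's English description precedes it below -/
import Mathlib

section
/- r_7 = (1 + 12√2)/7. That is, the maximum of ‖M‖_S over all 7×7 real matrices M with entries of absolute value at most 1 equals (1 + 12√2)/7, and it is attained by a circulant ±1 matrix. -/
open scoped ComplexOrder

/-- The operator norm (induced by Euclidean norms) of a complex matrix. -/
noncomputable def Matrix.copNorm {m n : Type*} [Fintype m] [Fintype n] [DecidableEq n]
    (M : Matrix m n ℂ) : ℝ :=
  ‖LinearMap.toContinuousLinearMap (Matrix.toEuclideanLin M)‖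

/-- The operator norm (induced by Euclidean norms) of a real matrix. -/
noncomputable def Matrix.ropNorm {m n : Type*} [Fintype m] [Fintype n] [DecidableEq n]
    (M : Matrix m n ℝ) : ℝ :=
  ‖LinearMap.toContinuousLinearMap (Matrix.toEuclideanLin M)‖

/-- The Schur norm of a complex square matrix: the supremum of `‖M ∘ C‖` over all
complex contractions `C`, where `∘` is the entrywise (Schur/Hadamard) product. -/
noncomputable def Matrix.schurNorm {n : Type*} [Fintype n] [DecidableEq n]
    (M : Matrix n n ℂ) : ℝ :=
  sSup {x | ∃ C : Matrix n n ℂ, Matrix.copNorm C ≤ 1 ∧ x = Matrix.copNorm (Matrix.hadamard M C)}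

/-- `rSchur n`: the supremum of Schur norms of `n × n` real matrices whose entries all have
absolute value at most `1`. -/
noncomputable def rSchur (n : ℕ) : ℝ :=
  sSup {x | ∃ M : Matrix (Fin n) (Fin n) ℝ, (∀ i j, |M i j| ≤ 1) ∧
    x = Matrix.schurNorm (M.map Complex.ofReal)}

section analysis

theorem copNorm_le_of {A : Matrix (Fin 7) (Fin 7) ℂ} {K : ℝ} (hK : 0 ≤ K)
    (h : ∀ v : Fin 7 → ℂ, ∑ i, ‖∑ j, A i j * v j‖ ^ 2 ≤ K ^ 2 * ∑ j, ‖v j‖ ^ 2) :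
    A.copNorm ≤ K := by
  unfold Matrix.copNorm
  refine ContinuousLinearMap.opNorm_le_bound _ hK (fun x => ?_)
  have h1 := h x.ofLp
  refine (sq_le_sq₀ (norm_nonneg _) (by positivity)).1 ?_
  rw [mul_pow, EuclideanSpace.norm_sq_eq, EuclideanSpace.norm_sq_eq]
  simpa [Matrix.toLpLin_apply, Matrix.mulVec, dotProduct] using h1

theorem of_copNorm_le {A : Matrix (Fin 7) (Fin 7) ℂ} {K : ℝ} (hA : A.copNorm ≤ K)
    (v : Fin 7 → ℂ) : ∑ i, ‖∑ j, A i j * v j‖ ^ 2 ≤ K ^ 2 * ∑ j, ‖v j‖ ^ 2 := by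
  unfold Matrix.copNorm at hA
  have h1 := ContinuousLinearMap.le_of_opNorm_le _ hA (WithLp.toLp 2 v)
  have h2 := pow_le_pow_left₀ (norm_nonneg _) h1 2
  rw [mul_pow, EuclideanSpace.norm_sq_eq, EuclideanSpace.norm_sq_eq] at h2
  simpa [Matrix.toLpLin_apply, Matrix.mulVec, dotProduct] using h2

/-- A weighted factorization bounds the Schur multiplier norm. -/
theorem fac_bound {ι : Type*} [Fintype ι] (S : Fin 7 → Fin 7 → ℝ) (w : ι → ℝ)
    (a b : Fin 7 → ι → ℝ) {α β K : ℝ} (hK : 0 ≤ K) (hα : 0 ≤ α) (hαβ : α * β ≤ K ^ 2)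
    (hw : ∀ l, 0 ≤ w l) (hS : ∀ i j, S i j = ∑ l, w l * a i l * b j l)
    (ha : ∀ i, ∑ l, w l * a i l ^ 2 ≤ α) (hb : ∀ j, ∑ l, w l * b j l ^ 2 ≤ β)
    (C : Matrix (Fin 7) (Fin 7) ℂ) (hC : C.copNorm ≤ 1) :
    (Matrix.hadamard ((Matrix.of S).map Complex.ofReal) C).copNorm ≤ K := by
  refine copNorm_le_of hK (fun v => ?_)
  set z : ι → Fin 7 → ℂ := fun l i => ∑ j, C i j * ((b j l : ℂ) * v j) with hz
  have e1 : ∀ i, ∑ j, (Matrix.hadamard ((Matrix.of S).map Complex.ofReal) C) i j * v j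
      = ∑ l, ((w l * a i l : ℝ) : ℂ) * z l i := by
    intro i
    simp only [hz, Finset.mul_sum, Matrix.hadamard_apply, Matrix.map_apply, Matrix.of_apply, hS]
    rw [Finset.sum_comm]
    refine Finset.sum_congr rfl (fun j _ => ?_)
    push_cast
    rw [Finset.sum_mul, Finset.sum_mul]
    refine Finset.sum_congr rfl (fun l _ => ?_)
    ring
  have e2 : ∀ i, ‖∑ l, ((w l * a i l : ℝ) : ℂ) * z l i‖ ^ 2 ≤ α * ∑ l, w l * ‖z l i‖ ^ 2 := by
    intro i
    have h1 : ‖∑ l, ((w l * a i l : ℝ) : ℂ) * z l i‖ ≤ ∑ l, w l * |a i l| * ‖z l i‖ := by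
      refine (norm_sum_le _ _).trans (Finset.sum_le_sum (fun l _ => ?_))
      rw [norm_mul, Complex.norm_real, norm_mul, Real.norm_eq_abs, Real.norm_eq_abs,
        abs_of_nonneg (hw l)]
    have h2 : (∑ l, w l * |a i l| * ‖z l i‖) ^ 2
        ≤ (∑ l, w l * a i l ^ 2) * ∑ l, w l * ‖z l i‖ ^ 2 := by
      refine Finset.sum_sq_le_sum_mul_sum_of_sq_le_mul _ (fun l _ => ?_) (fun l _ => ?_)
        (fun l _ => ?_)
      · exact mul_nonneg (hw l) (sq_nonneg _)
      · exact mul_nonneg (hw l) (sq_nonneg _)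
      · rw [mul_pow, mul_pow, sq_abs]; exact le_of_eq (by ring)
    have h3 : 0 ≤ ∑ l, w l * ‖z l i‖ ^ 2 :=
      Finset.sum_nonneg (fun l _ => mul_nonneg (hw l) (sq_nonneg _))
    calc _ ≤ (∑ l, w l * |a i l| * ‖z l i‖) ^ 2 := pow_le_pow_left₀ (norm_nonneg _) h1 2
      _ ≤ _ := h2
      _ ≤ _ := mul_le_mul_of_nonneg_right (ha i) h3
  have e3 : ∀ l, ∑ i, ‖z l i‖ ^ 2 ≤ ∑ j, b j l ^ 2 * ‖v j‖ ^ 2 := by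
    intro l
    have := of_copNorm_le hC (fun j => (b j l : ℂ) * v j)
    simpa [hz, mul_pow] using this
  calc ∑ i, ‖∑ j, (Matrix.hadamard ((Matrix.of S).map Complex.ofReal) C) i j * v j‖ ^ 2
      = ∑ i, ‖∑ l, ((w l * a i l : ℝ) : ℂ) * z l i‖ ^ 2 := by simp only [e1]
    _ ≤ ∑ i, α * ∑ l, w l * ‖z l i‖ ^ 2 := Finset.sum_le_sum (fun i _ => e2 i)
    _ = α * ∑ l, w l * ∑ i, ‖z l i‖ ^ 2 := by
        rw [← Finset.mul_sum, Finset.sum_comm]; simp only [Finset.mul_sum]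
    _ ≤ α * ∑ l, w l * ∑ j, b j l ^ 2 * ‖v j‖ ^ 2 := by
        refine mul_le_mul_of_nonneg_left (Finset.sum_le_sum (fun l _ => ?_)) hα
        exact mul_le_mul_of_nonneg_left (e3 l) (hw l)
    _ = α * ∑ j, (∑ l, w l * b j l ^ 2) * ‖v j‖ ^ 2 := by
        congr 1
        simp only [Finset.mul_sum, Finset.sum_mul]
        rw [Finset.sum_comm]
        simp only [mul_assoc]
    _ ≤ α * ∑ j, β * ‖v j‖ ^ 2 := by
        refine mul_le_mul_of_nonneg_left (Finset.sum_le_sum (fun j _ => ?_)) hα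
        exact mul_le_mul_of_nonneg_right (hb j) (sq_nonneg _)
    _ = (α * β) * ∑ j, ‖v j‖ ^ 2 := by rw [← Finset.mul_sum, mul_assoc]
    _ ≤ _ := mul_le_mul_of_nonneg_right hαβ (Finset.sum_nonneg (fun j _ => sq_nonneg _))

/-- The constant. -/
noncomputable def cst : ℝ := (1 + 12 * Real.sqrt 2) / 7

theorem sqrt_two_bounds : (1.4142 : ℝ) ≤ Real.sqrt 2 ∧ Real.sqrt 2 ≤ 1.4143 := by
  constructor
  · exact Real.le_sqrt_of_sq_le (by norm_num)
  · exact Real.sqrt_le_iff.2 (by norm_num)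

theorem cst_pos : 0 ≤ cst := by unfold cst; positivity

theorem cst_sq : (6.59 : ℝ) ≤ cst ^ 2 := by
  have := sqrt_two_bounds.1
  have h : (2.5672 : ℝ) - 0.0001 ≤ cst := by unfold cst; linarith
  nlinarith

/-- All Schur products with contractions are bounded by the constant. -/
def SB (S : Fin 7 → Fin 7 → ℝ) : Prop :=
  ∀ C : Matrix (Fin 7) (Fin 7) ℂ, C.copNorm ≤ 1 →
    (Matrix.hadamard ((Matrix.of S).map Complex.ofReal) C).copNorm ≤ cst

theorem copNorm_add (A B : Matrix (Fin 7) (Fin 7) ℂ) :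
    (A + B).copNorm ≤ A.copNorm + B.copNorm := by
  unfold Matrix.copNorm
  rw [map_add, map_add]
  exact norm_add_le _ _

theorem copNorm_smul (r : ℝ) (hr : 0 ≤ r) (A : Matrix (Fin 7) (Fin 7) ℂ) :
    ((r : ℂ) • A).copNorm = r * A.copNorm := by
  unfold Matrix.copNorm
  rw [map_smul, map_smul, norm_smul, Complex.norm_real, Real.norm_eq_abs, abs_of_nonneg hr]

theorem SB_convex : Convex ℝ {S | SB S} := by
  intro S hS T hT p q hp hq hpq C hC
  have e : Matrix.hadamard ((Matrix.of (p • S + q • T)).map Complex.ofReal) C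
      = (p : ℂ) • Matrix.hadamard ((Matrix.of S).map Complex.ofReal) C
        + (q : ℂ) • Matrix.hadamard ((Matrix.of T).map Complex.ofReal) C := by
    ext i j
    simp [Matrix.hadamard_apply]
    ring
  rw [e]
  refine (copNorm_add _ _).trans ?_
  rw [copNorm_smul _ hp, copNorm_smul _ hq]
  calc _ ≤ p * cst + q * cst :=
        add_le_add (mul_le_mul_of_nonneg_left (hS C hC) hp) (mul_le_mul_of_nonneg_left (hT C hC) hq)
    _ = cst := by rw [← add_mul, hpq, one_mul]

/-- Sign of a Boolean. -/
def sg (b : Bool) : ℝ := if b then -1 else 1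

theorem SB_of_signs (h : ∀ M : Fin 7 → Fin 7 → Bool, SB (fun i j => sg (M i j)))
    (S : Fin 7 → Fin 7 → ℝ) (hS : ∀ i j, |S i j| ≤ 1) : SB S := by
  have h1 : (Set.univ.pi fun _ : Fin 7 => Set.univ.pi fun _ : Fin 7 => ({-1, 1} : Set ℝ))
      ⊆ {S | SB S} := by
    intro T hT
    have := h (fun i j => decide (T i j = -1))
    have e : (fun i j => sg (decide (T i j = -1))) = T := by
      funext i j
      have := hT i trivial j trivial
      rcases this with h | h
      · simp [sg, h]
      · simp only [Set.mem_singleton_iff] at h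
        rw [h]; norm_num [sg]
    rw [e] at this
    exact this
  have h2 := convexHull_min h1 SB_convex
  refine h2 ?_
  rw [convexHull_pi]
  intro i _
  simp only [convexHull_pi]
  intro j _
  rw [convexHull_pair, segment_eq_Icc (by norm_num)]
  exact abs_le.1 (hS i j)

end analysis

section combinatorics

/-- `permBits g c` has bit `a` equal to bit `g[a]` of `c`. -/
def permBits : List Nat → Nat → Nat
  | [], _ => 0
  | i :: g, c => (c >>> i) % 2 + 2 * permBits g c

/-- Normalization: complement the lowest `k` bits if bit `0` is set. -/
def normBits (k d : Nat) : Nat := d ^^^ ((2 ^ k - 1) * (d % 2))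

/-- Row permutation, row sign changes, and normalization on a column code. -/
def trc (k : Nat) (g : List Nat) (r c : Nat) : Nat := normBits k (permBits g c ^^^ r)

/-- Append a row, with bits given by `y`. -/
def extGo (k : Nat) : List Nat → Nat → List Nat
  | [], _ => []
  | c :: cs, y => (bif Nat.beq (y % 2) 1 then c ^^^ 2 ^ k else c) :: extGo k cs (y / 2)

/-- Append a row; the first column is left alone. -/
def extY (k : Nat) : List Nat → Nat → List Nat
  | [], _ => []
  | c :: cs, y => c :: extGo k cs y

/-- Bounded universal quantification. -/
def allB : Nat → (Nat → Bool) → Bool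
  | 0, _ => true
  | n + 1, f => f n && allB n f

theorem allB_spec {n : Nat} {f : Nat → Bool} (h : allB n f = true) : ∀ m < n, f m = true := by
  induction n with
  | zero => intro m hm; omega
  | succ n ih =>
    simp only [allB, Bool.and_eq_true] at h
    intro m hm
    rcases Nat.lt_succ_iff_lt_or_eq.1 hm with h1 | h1
    · exact ih h.2 m h1
    · rw [h1]; exact h.1

/-- The code `c` describes (up to sign) column `j` of `M` on the rows `π 0, …, π (k-1)`. -/
def RC (M : Fin 7 → Fin 7 → Bool) (π : Equiv.Perm (Fin 7)) (ρ : ℕ → Bool) (k : ℕ)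
    (c : ℕ) (j : Fin 7) : Prop :=
  ∃ τ : Bool, ∀ a : Fin 7, a.val < k → c.testBit a = (M (π a) j ^^ ρ a ^^ τ)

/-- The list `L` of column codes describes `k` rows of `M`. -/
def Emb (M : Fin 7 → Fin 7 → Bool) (k : ℕ) (L : List ℕ) : Prop :=
  ∃ (π : Equiv.Perm (Fin 7)) (ρ : ℕ → Bool) (cols : List (Fin 7)),
    (∀ j, j ∈ cols) ∧ List.Forall₂ (RC M π ρ k) L cols

theorem emb_init (M : Fin 7 → Fin 7 → Bool) : Emb M 1 [0, 0, 0, 0, 0, 0, 0] := by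
  refine ⟨1, fun _ => false, [0, 1, 2, 3, 4, 5, 6], by decide, ?_⟩
  have : ∀ j, RC M 1 (fun _ => false) 1 0 j := by
    intro j
    refine ⟨M 0 j, fun a ha => ?_⟩
    have : a = 0 := by ext; simpa using ha
    subst this
    simp
  simp [this]

theorem extGo_exists (M : Fin 7 → Fin 7 → Bool) (π : Equiv.Perm (Fin 7)) (ρ : ℕ → Bool) (k : ℕ)
    (hk : k < 7) (s : Bool) (cs : List ℕ) (cols : List (Fin 7))
    (h : List.Forall₂ (RC M π ρ k) cs cols) :
    ∃ y < 2 ^ cs.length,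
      List.Forall₂ (RC M π (Function.update ρ k s) (k + 1)) (extGo k cs y) cols := by
  induction h with
  | nil => exact ⟨0, by simp, by simp [extGo]⟩
  | @cons c j cs cols hc _ ih =>
    obtain ⟨y, hy, hF⟩ := ih
    obtain ⟨τ, hτ⟩ := hc
    have key : ∃ b : Bool, RC M π (Function.update ρ k s) (k + 1)
        (bif b then c ^^^ 2 ^ k else c) j := by
      refine ⟨(c.testBit k ^^ (M (π ⟨k, hk⟩) j ^^ s ^^ τ)), τ, fun a ha => ?_⟩
      rcases Nat.lt_succ_iff_lt_or_eq.1 ha with h1 | h1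
      · have h2 : (Function.update ρ k s) a = ρ a := Function.update_of_ne (by omega) _ _
        rw [h2, ← hτ a h1]
        cases (c.testBit k ^^ (M (π ⟨k, hk⟩) j ^^ s ^^ τ))
        · rfl
        · have : k ≠ a.val := by omega
          simp [Nat.testBit_xor, this]
      · have ha' : a = ⟨k, hk⟩ := by ext; exact h1
        subst ha'
        simp only [Function.update_self]
        generalize (M (π ⟨k, hk⟩) j ^^ s ^^ τ) = u
        cases hcu : c.testBit k <;> cases u <;>
          simp [Nat.testBit_xor, hcu]
    obtain ⟨b, hb⟩ := key
    refine ⟨2 * y + b.toNat, ?_, ?_⟩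
    · simp only [List.length_cons, pow_succ]
      have := Bool.toNat_le b
      omega
    · simp only [extGo]
      have h1 : (2 * y + b.toNat) / 2 = y := by
        have := Bool.toNat_le b
        omega
      have h2 : Nat.beq ((2 * y + b.toNat) % 2) 1 = b := by
        cases b
        · simp only [Bool.toNat_false, add_zero, Nat.mul_mod_right]; rfl
        · simp only [Bool.toNat_true, Nat.mul_add_mod]; rfl
      rw [h1, h2]
      exact List.Forall₂.cons hb hF

theorem emb_ext {M : Fin 7 → Fin 7 → Bool} {k : ℕ} (hk : k < 7) {L : List ℕ}
    (hL : L.length = 7) (h : Emb M k L) : ∃ y < 64, Emb M (k + 1) (extY k L y) := by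
  obtain ⟨π, ρ, cols, hcols, hF⟩ := h
  cases hF with
  | nil => simp at hL
  | @cons c j cs cols hc hF =>
    obtain ⟨τ, hτ⟩ := hc
    set s : Bool := (c.testBit k ^^ (M (π ⟨k, hk⟩) j ^^ τ)) with hs
    obtain ⟨y, hy, hF'⟩ := extGo_exists M π ρ k hk s cs cols hF
    have hlen : cs.length = 6 := by simpa using hL
    rw [hlen] at hy
    refine ⟨y, hy, π, Function.update ρ k s, j :: cols, hcols, ?_⟩
    refine List.Forall₂.cons ⟨τ, fun a ha => ?_⟩ hF'
    rcases Nat.lt_succ_iff_lt_or_eq.1 ha with h1 | h1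
    · have h2 : (Function.update ρ k s) a = ρ a := Function.update_of_ne (by omega) _ _
      rw [h2, hτ a h1]
    · have ha' : a = ⟨k, hk⟩ := by ext; exact h1
      subst ha'
      simp only [Function.update_self, hs]
      cases c.testBit k <;> cases M (π ⟨k, hk⟩) j <;> cases τ <;> rfl

theorem testBit_permBits (g : List ℕ) (c : ℕ) (a : ℕ) (ha : a < g.length) :
    (permBits g c).testBit a = c.testBit g[a] := by
  induction g generalizing a with
  | nil => simp at ha
  | cons i g ih =>
    have hb : permBits (i :: g) c = 2 * permBits g c + (c.testBit i).toNat := by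
      simp only [permBits]
      rw [Nat.toNat_testBit, Nat.shiftRight_eq_div_pow, add_comm]
    rw [hb]
    cases a with
    | zero =>
      simp only [Nat.testBit_zero, List.getElem_cons_zero]
      cases c.testBit i <;> simp [Nat.add_mod]
    | succ a =>
      rw [Nat.testBit_succ]
      have : (2 * permBits g c + (c.testBit i).toNat) / 2 = permBits g c := by
        have := Bool.toNat_le (c.testBit i)
        omega
      rw [this, ih a (by simpa using ha)]
      simp

theorem testBit_normBits (k d a : ℕ) (ha : a < k) :
    (normBits k d).testBit a = (d.testBit a ^^ d.testBit 0) := by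
  unfold normBits
  rw [Nat.testBit_xor, Nat.testBit_zero]
  rcases Nat.mod_two_eq_zero_or_one d with h | h <;> simp [h, ha, Nat.testBit_two_pow_sub_one]

/-- The list is a permutation of `0, …, 6`. -/
def permOK (g : List Nat) : Bool :=
  match g with
  | [a, b, c, d, e, f, h] =>
    Nat.beq (2 ^ a ||| 2 ^ b ||| 2 ^ c ||| 2 ^ d ||| 2 ^ e ||| 2 ^ f ||| 2 ^ h) 127
  | _ => false

theorem permOK_spec {g : List ℕ} (h : permOK g = true) :
    ∃ σ : Equiv.Perm (Fin 7), ∃ hl : g.length = 7, ∀ a : Fin 7, g[a.val] = (σ a).val := by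
  unfold permOK at h
  split at h
  case h_2 => simp at h
  case h_1 a b c d e f i =>
    have h' := Nat.eq_of_beq_eq_true h
    have hb : ∀ x : ℕ, (x = a ∨ x = b ∨ x = c ∨ x = d ∨ x = e ∨ x = f ∨ x = i) ↔ x < 7 := by
      intro x
      have := congrArg (fun n => n.testBit x) h'
      simp only [Nat.testBit_or, Nat.testBit_two_pow] at this
      have h127 : Nat.testBit 127 x = decide (x < 7) := Nat.testBit_two_pow_sub_one 7 x
      rw [h127] at this
      have h2 := (Bool.eq_iff_iff.1 this)
      simp only [Bool.or_eq_true, decide_eq_true_eq] at h2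
      rw [← h2]
      constructor <;> intro hh <;> simp only [eq_comm (a := x)] at * <;> tauto
    have hlt : ∀ n : Fin 7, [a, b, c, d, e, f, i][n.val]'(by simp) < 7 := by
      intro n
      apply (hb _).1
      fin_cases n <;> simp
    have hsurj : Function.Surjective
        (fun n : Fin 7 => (⟨[a, b, c, d, e, f, i][n.val]'(by simp), hlt n⟩ : Fin 7)) := by
      intro x
      rcases (hb x.val).2 x.isLt with h | h | h | h | h | h | h
      · exact ⟨0, by ext; simp [h]⟩
      · exact ⟨1, by ext; simp [h]⟩
      · exact ⟨2, by ext; simp [h]⟩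
      · exact ⟨3, by ext; simp [h]⟩
      · exact ⟨4, by ext; simp [h]⟩
      · exact ⟨5, by ext; simp [h]⟩
      · exact ⟨6, by ext; simp [h]⟩
    exact ⟨Equiv.ofBijective _ (Finite.surjective_iff_bijective.1 hsurj), rfl, fun n => rfl⟩

theorem emb_tr {M : Fin 7 → Fin 7 → Bool} {k k' : ℕ} (hk : k' ≤ 7) {L : List ℕ} {g : List ℕ} (r : ℕ)
    (hg : permOK g = true) (hlt : (g.take k').all (fun i => Nat.blt i k) = true)
    (h : Emb M k L) : Emb M k' (L.map (trc k' (g.take k') r)) := by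
  obtain ⟨σ, hl, hσ⟩ := permOK_spec hg
  obtain ⟨π, ρ, cols, hcols, hF⟩ := h
  refine ⟨σ.trans π, fun a => (ρ (g.getD a 0) ^^ r.testBit a), cols, hcols, ?_⟩
  rw [List.forall₂_map_left_iff]
  refine hF.imp (fun c j hc => ?_)
  obtain ⟨τ, hτ⟩ := hc
  refine ⟨τ ^^ (permBits (g.take k') c ^^^ r).testBit 0, fun a ha => ?_⟩
  have hlen : a.val < (g.take k').length := by simp; omega
  have h1 : (g.take k')[a.val] = (σ a).val := by
    rw [List.getElem_take]; exact hσ a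
  have h2 : (σ a).val < k := by
    rw [← h1]
    have := List.all_eq_true.1 hlt _ (List.getElem_mem hlen)
    simpa using this
  have h3 : g.getD a 0 = (σ a).val := by
    rw [← hσ a]; simp [hl]
  unfold trc
  rw [testBit_normBits _ _ _ ha, Nat.testBit_xor, testBit_permBits _ _ _ hlen, h1, hτ _ h2]
  simp only [Equiv.trans_apply, h3]
  generalize (permBits (List.take k' g) c ^^^ r).testBit 0 = u
  cases M (π (σ a)) j <;> cases ρ (σ a) <;> cases τ <;> cases r.testBit a <;> cases u <;> rfl

theorem emb_perm {M : Fin 7 → Fin 7 → Bool} {k : ℕ} {L T : List ℕ} (hp : L.Perm T)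
    (h : Emb M k L) : Emb M k T := by
  obtain ⟨π, ρ, cols, hcols, hF⟩ := h
  obtain ⟨cols', h1, h2⟩ := List.perm_comp_forall₂ hp.symm hF
  exact ⟨π, ρ, cols', fun j => h2.mem_iff.2 (hcols j), h1⟩

end combinatorics

section certificates

/-- A mask of column patterns on `k` rows which forces the Schur bound. -/
def CertSound (k mask : ℕ) : Prop :=
  ∀ (M : Fin 7 → Fin 7 → Bool) (L : List ℕ), Emb M k L → (∀ c ∈ L, mask.testBit c = true) →
    SB (fun i j => sg (M i j))

theorem forall₂_exists {α β : Type*} {R : α → β → Prop} {L : List α} {l : List β}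
    (h : List.Forall₂ R L l) : ∀ j ∈ l, ∃ c ∈ L, R c j := by
  induction h with
  | nil => simp
  | @cons a b l1 l2 hab _ ih =>
    intro j hj
    rcases List.mem_cons.1 hj with rfl | hj
    · exact ⟨a, by simp, hab⟩
    · obtain ⟨c, hc, hR⟩ := ih j hj
      exact ⟨c, by simp [hc], hR⟩

theorem emb_cols {M : Fin 7 → Fin 7 → Bool} {k mask : ℕ} {L : List ℕ} (hk : k ≤ 7)
    (hm : mask < 2 ^ 2 ^ k) (h : Emb M k L) (hL : ∀ c ∈ L, mask.testBit c = true) :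
    ∃ (π : Equiv.Perm (Fin 7)) (ρ : ℕ → Bool), ∀ j, ∃ τ : Bool, ∃ e < 128,
      mask.testBit (e % 2 ^ k) = true ∧
        ∀ a : Fin 7, e.testBit a = (M (π a) j ^^ ρ a ^^ τ) := by
  obtain ⟨π, ρ, cols, hcols, hF⟩ := h
  refine ⟨π, ρ, fun j => ?_⟩
  obtain ⟨c, hc, τ, hτ⟩ := forall₂_exists hF j (hcols j)
  have hmc := hL c hc
  have hck : c < 2 ^ k := by
    by_contra hcon
    push Not at hcon
    have := Nat.testBit_lt_two_pow (lt_of_lt_of_le hm (Nat.pow_le_pow_right (by norm_num) hcon))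
    rw [this] at hmc
    exact Bool.noConfusion hmc
  refine ⟨τ, Nat.ofBits (fun a : Fin 7 => (M (π a) j ^^ ρ a ^^ τ)), Nat.ofBits_lt_two_pow _, ?_, ?_⟩
  · have : Nat.ofBits (fun a : Fin 7 => (M (π a) j ^^ ρ a ^^ τ)) % 2 ^ k = c := by
      apply Nat.eq_of_testBit_eq
      intro i
      rw [Nat.testBit_mod_two_pow]
      by_cases hi : i < k
      · have hi7 : i < 7 := by omega
        rw [Nat.testBit_ofBits_lt _ _ hi7, hτ ⟨i, hi7⟩ hi]
        simp [hi]
      · have : c < 2 ^ i := lt_of_lt_of_le hck (Nat.pow_le_pow_right (by norm_num) (by omega))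
        rw [Nat.testBit_lt_two_pow this]
        simp [hi]
    rw [this]; exact hmc
  · intro a
    exact Nat.testBit_ofBits_lt _ _ a.isLt

theorem sg_xor (a b : Bool) : sg (a ^^ b) = sg a * sg b := by
  cases a <;> cases b <;> simp [sg]

theorem sg_sq (a : Bool) : sg a ^ 2 = 1 := by
  cases a <;> simp [sg]

theorem fac_transfer {ι : Type*} [Fintype ι] {k mask : ℕ} (hk : k ≤ 7) (hm : mask < 2 ^ 2 ^ k)
    (w : ι → ℝ) (A : Fin 7 → ι → ℝ) (B : ℕ → ι → ℝ) {α β : ℝ} (hα : 0 ≤ α)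
    (hαβ : α * β ≤ cst ^ 2) (hw : ∀ l, 0 ≤ w l) (hA : ∀ i, ∑ l, w l * A i l ^ 2 ≤ α)
    (hB : ∀ e < 128, mask.testBit (e % 2 ^ k) = true → ∑ l, w l * B e l ^ 2 ≤ β)
    (hAB : ∀ e < 128, mask.testBit (e % 2 ^ k) = true →
      ∀ a : Fin 7, sg (e.testBit a) = ∑ l, w l * A a l * B e l) : CertSound k mask := by
  intro M L h hL
  obtain ⟨π, ρ, hcol⟩ := emb_cols hk hm h hL
  choose τ e he hme hbit using hcol
  intro C hC
  refine fac_bound (fun i j => sg (M i j)) w (fun i l => sg (ρ (π.symm i)) * A (π.symm i) l)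
    (fun j l => sg (τ j) * B (e j) l) cst_pos hα hαβ hw ?_ ?_ ?_ C hC
  · intro i j
    have h1 := hAB (e j) (he j) (hme j) (π.symm i)
    rw [hbit j (π.symm i)] at h1
    simp only [sg_xor, Equiv.apply_symm_apply] at h1
    have h2 : ∑ l, w l * (sg (ρ (π.symm i)) * A (π.symm i) l) * (sg (τ j) * B (e j) l)
        = sg (ρ (π.symm i)) * sg (τ j) * ∑ l, w l * A (π.symm i) l * B (e j) l := by
      rw [Finset.mul_sum]
      exact Finset.sum_congr rfl (fun l _ => by ring)
    rw [h2, ← h1]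
    have e1 := sg_sq (ρ (π.symm i))
    have e2 := sg_sq (τ j)
    calc sg (M i j) = sg (M i j) * (sg (ρ (π.symm i)) ^ 2) * (sg (τ j) ^ 2) := by rw [e1, e2]; ring
      _ = _ := by ring
  · intro i
    simpa only [mul_pow, sg_sq, one_mul] using hA (π.symm i)
  · intro j
    simpa only [mul_pow, sg_sq, one_mul] using hB (e j) (he j) (hme j)

/-- Sum of seven terms. -/
def sum7 (f : Nat → Int) : Int := f 0 + f 1 + f 2 + f 3 + f 4 + f 5 + f 6

theorem sum7_cast (f : Nat → Int) : ((sum7 f : Int) : ℝ) = ∑ i : Fin 7, ((f i.val : Int) : ℝ) := by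
  rw [Fin.sum_univ_seven]
  simp [sum7]

/-- Integer sign of a bit. -/
def sgZ (e a : Nat) : Int := bif e.testBit a then -1 else 1

theorem sgZ_cast (e a : Nat) : ((sgZ e a : Int) : ℝ) = sg (e.testBit a) := by
  unfold sgZ sg
  cases e.testBit a <;> simp

/-- Entry of a `k × k` block extended by `d` times the identity. -/
def ent (k : Nat) (d : Int) (A : List (List Int)) (i l : Nat) : Int :=
  bif Nat.blt i k then (A.getD i []).getD l 0 else bif Nat.beq i l then d else 0

/-- `x` on the first `k` indices, `y` elsewhere. -/
def wt (k : Nat) (x y : Int) (l : Nat) : Int := bif Nat.blt l k then x else y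

/-- Apply the matrix to a sign pattern. -/
def xm (k : Nat) (t : Int) (X : List (List Int)) (e l : Nat) : Int :=
  sum7 (fun i => ent k t X l i * sgZ e i)

/-- Verification of an integer certificate. -/
def checkCert (k mask : Nat) (N t : Int) (A X : List (List Int)) : Bool :=
  Nat.ble k 7 && (Nat.blt mask (2 ^ 2 ^ k) && (decide (0 < N) && (decide (0 < t) &&
  (allB 7 (fun i => decide (sum7 (fun l => wt k 1 N l * (ent k 1 A i l * ent k 1 A i l)) ≤ N)) &&
  (allB 7 (fun i => allB 7 (fun j =>
    decide (sum7 (fun l => ent k 1 A i l * ent k t X l j) = bif Nat.beq i j then t else 0))) &&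
  allB 128 (fun e => !(mask.testBit (e % 2 ^ k)) ||
    decide (100 * sum7 (fun l => wt k N 1 l * (xm k t X e l * xm k t X e l)) ≤ 659 * (t * t))))))))

theorem checkCert_sound {k mask : Nat} {N t : Int} {A X : List (List Int)}
    (h : checkCert k mask N t A X = true) : CertSound k mask := by
  simp only [checkCert, Bool.and_eq_true, decide_eq_true_eq] at h
  obtain ⟨h1, h2, hN, ht, hrow, hinv, hcol⟩ := h
  have hk : k ≤ 7 := Nat.le_of_ble_eq_true h1
  have hm : mask < 2 ^ 2 ^ k := by simpa [Nat.blt_eq] using h2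
  have hN' : (0 : ℝ) < N := by exact_mod_cast hN
  have ht' : (0 : ℝ) < t := by exact_mod_cast ht
  have hU : ∀ l, (0 : ℝ) < (wt k N 1 l : ℤ) := by
    intro l
    unfold wt
    cases Nat.blt l k
    · simp
    · simpa using hN'
  have hWU : ∀ l, ((wt k 1 N l : ℤ) : ℝ) * (wt k N 1 l : ℤ) = N := by
    intro l
    unfold wt
    cases Nat.blt l k <;> simp
  refine fac_transfer (α := 1) (β := 6.59) (ι := Fin 7) hk hm
    (fun l => 1 / ((wt k N 1 l : ℤ) : ℝ)) (fun i l => ((ent k 1 A i l : ℤ) : ℝ))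
    (fun e l => ((wt k N 1 l : ℤ) : ℝ) * ((xm k t X e l : ℤ) : ℝ) / t) zero_le_one
    (by rw [one_mul]; exact cst_sq) (fun l => (one_div_pos.2 (hU l)).le) ?_ ?_ ?_
  · intro i
    have := allB_spec hrow i i.isLt
    rw [decide_eq_true_eq] at this
    have h3 : ((sum7 (fun l => wt k 1 N l * (ent k 1 A i l * ent k 1 A i l)) : ℤ) : ℝ) ≤ N := by
      exact_mod_cast this
    rw [sum7_cast] at h3
    have h4 : ∑ l : Fin 7, 1 / ((wt k N 1 l : ℤ) : ℝ) * ((ent k 1 A i l : ℤ) : ℝ) ^ 2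
        = (∑ l : Fin 7, ((wt k 1 N l * (ent k 1 A i l * ent k 1 A i l) : ℤ) : ℝ)) / N := by
      rw [Finset.sum_div]
      refine Finset.sum_congr rfl (fun l _ => ?_)
      rw [← hWU l]
      have := (hU l).ne'
      have hW : ((wt k 1 N l : ℤ) : ℝ) ≠ 0 := by
        intro h0
        have := hWU l
        rw [h0, zero_mul] at this
        exact hN'.ne this
      push_cast
      field_simp
    rw [h4, div_le_one hN']
    exact h3
  · intro e he hme
    have := allB_spec hcol e he
    rw [hme] at this
    simp only [Bool.not_true, Bool.false_or, decide_eq_true_eq] at this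
    have h3 : ((100 * sum7 (fun l => wt k N 1 l * (xm k t X e l * xm k t X e l)) : ℤ) : ℝ)
        ≤ ((659 * (t * t) : ℤ) : ℝ) := by exact_mod_cast this
    rw [Int.cast_mul, sum7_cast] at h3
    push_cast at h3
    have h4 : ∑ l : Fin 7, 1 / ((wt k N 1 l : ℤ) : ℝ) *
          (((wt k N 1 l : ℤ) : ℝ) * ((xm k t X e l : ℤ) : ℝ) / t) ^ 2
        = (∑ l : Fin 7, ((wt k N 1 l : ℤ) : ℝ) *
          (((xm k t X e l : ℤ) : ℝ) * ((xm k t X e l : ℤ) : ℝ))) / (t * t) := by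
      rw [Finset.sum_div]
      refine Finset.sum_congr rfl (fun l _ => ?_)
      have := (hU l).ne'
      field_simp
    rw [h4, div_le_iff₀ (by positivity)]
    linarith
  · intro e he hme a
    have h4 : ∑ l : Fin 7, 1 / ((wt k N 1 l : ℤ) : ℝ) * ((ent k 1 A a l : ℤ) : ℝ) *
          (((wt k N 1 l : ℤ) : ℝ) * ((xm k t X e l : ℤ) : ℝ) / t)
        = (∑ l : Fin 7, ((ent k 1 A a l : ℤ) : ℝ) * ((xm k t X e l : ℤ) : ℝ)) / t := by
      rw [Finset.sum_div]
      refine Finset.sum_congr rfl (fun l _ => ?_)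
      have := (hU l).ne'
      field_simp
    rw [h4, eq_div_iff ht'.ne']
    have h5 : ∀ l : Fin 7, ((xm k t X e l : ℤ) : ℝ)
        = ∑ i : Fin 7, ((ent k t X l i : ℤ) : ℝ) * sg (e.testBit i) := by
      intro l
      unfold xm
      rw [sum7_cast]
      refine Finset.sum_congr rfl (fun i _ => ?_)
      rw [Int.cast_mul, sgZ_cast]
    have h6 : ∀ i : Fin 7, ∑ l : Fin 7, ((ent k 1 A a l : ℤ) : ℝ) * ((ent k t X l i : ℤ) : ℝ)
        = if a = i then (t : ℝ) else 0 := by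
      intro i
      have := allB_spec (allB_spec hinv a a.isLt) i i.isLt
      rw [decide_eq_true_eq] at this
      have h7 := congrArg (fun z : ℤ => (z : ℝ)) this
      simp only [sum7_cast] at h7
      push_cast at h7
      rw [h7]
      by_cases hai : a = i
      · simp [hai]
      · have : Nat.beq a.val i.val = false := by
          rw [Bool.eq_false_iff]
          intro hh
          exact hai (Fin.ext (Nat.eq_of_beq_eq_true hh))
        simp [hai, this]
    simp only [h5, Finset.mul_sum]
    rw [Finset.sum_comm]
    simp only [← mul_assoc, ← Finset.sum_mul, h6]
    simp [mul_comm]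

/-- Verification for the balanced patterns on seven rows. -/
def checkBal (mask : Nat) : Bool :=
  Nat.blt mask (2 ^ 2 ^ 7) &&
  allB 128 (fun e => !(mask.testBit (e % 2 ^ 7)) ||
    decide (sum7 (sgZ e) * sum7 (sgZ e) = 1))

theorem checkBal_sound {mask : Nat} (h : checkBal mask = true) : CertSound 7 mask := by
  simp only [checkBal, Bool.and_eq_true] at h
  obtain ⟨h2, hcol⟩ := h
  have hm : mask < 2 ^ 2 ^ 7 := by simpa [Nat.blt_eq] using h2
  have hs2 : Real.sqrt 2 ^ 2 = 2 := Real.sq_sqrt (by norm_num)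
  have hs0 : 0 < Real.sqrt 2 := by positivity
  have hsum : ∀ e < 128, mask.testBit (e % 2 ^ 7) = true →
      (∑ i : Fin 7, sg (e.testBit i)) ^ 2 = 1 := by
    intro e he hme
    have := allB_spec hcol e he
    rw [hme] at this
    simp only [Bool.not_true, Bool.false_or, decide_eq_true_eq] at this
    have h7 := congrArg (fun z : ℤ => (z : ℝ)) this
    simp only [Int.cast_mul, sum7_cast, sgZ_cast] at h7
    rw [sq, h7]; norm_num
  refine fac_transfer (α := cst) (β := cst) (ι := Fin 7 ⊕ Unit) le_rfl hm
    (Sum.elim (fun _ => 2 * Real.sqrt 2) (fun _ => 1 / 7))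
    (fun a => Sum.elim (fun l => (if a = l then 1 else 0) - 1 / 7) (fun _ => 1))
    (fun e => Sum.elim
      (fun l => (sg (e.testBit l) - (∑ i : Fin 7, sg (e.testBit i)) / 7) / (2 * Real.sqrt 2))
      (fun _ => ∑ i : Fin 7, sg (e.testBit i))) cst_pos (by rw [sq]) ?_ ?_ ?_ ?_
  · rintro (l | l) <;> simp
  · intro i
    simp only [Fintype.sum_sum_type, Sum.elim_inl, Sum.elim_inr, cst]
    fin_cases i <;> simp [Fin.sum_univ_seven] <;> apply le_of_eq <;> ring
  · intro e he hme
    have hs := hsum e he hme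
    simp only [Fintype.sum_sum_type, Sum.elim_inl, Sum.elim_inr, cst]
    set s := ∑ i : Fin 7, sg (e.testBit i) with hsdef
    have h1 : ∑ l : Fin 7, 2 * Real.sqrt 2 * ((sg (e.testBit l) - s / 7) / (2 * Real.sqrt 2)) ^ 2
        = Real.sqrt 2 / 4 * ∑ l : Fin 7, (1 - 2 / 7 * s * sg (e.testBit l) + 1 / 49) := by
      rw [Finset.mul_sum]
      refine Finset.sum_congr rfl (fun l _ => ?_)
      have h3 : (sg (e.testBit l) - s / 7) ^ 2 = 1 - 2 / 7 * s * sg (e.testBit l) + 1 / 49 := by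
        have := sg_sq (e.testBit l)
        linear_combination this + hs / 49
      rw [div_pow, h3, mul_pow, hs2]
      field_simp
      ring
    rw [h1, Finset.sum_add_distrib, Finset.sum_sub_distrib, ← Finset.mul_sum, ← hsdef]
    simp
    rw [hs]
    apply le_of_eq
    linear_combination (-(1 / 14) * Real.sqrt 2) * hs
  · intro e he hme a
    simp only [Fintype.sum_sum_type, Sum.elim_inl, Sum.elim_inr]
    set s := ∑ i : Fin 7, sg (e.testBit i) with hsdef
    have h1 : ∑ l : Fin 7, 2 * Real.sqrt 2 * ((if a = l then 1 else 0) - 1 / 7) *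
          ((sg (e.testBit l) - s / 7) / (2 * Real.sqrt 2))
        = ∑ l : Fin 7, ((if a = l then (sg (e.testBit l) - s / 7) else 0)
          - 1 / 7 * (sg (e.testBit l) - s / 7)) := by
      refine Finset.sum_congr rfl (fun l _ => ?_)
      split_ifs <;> field_simp <;> ring
    rw [h1, Finset.sum_sub_distrib, ← Finset.mul_sum, Finset.sum_sub_distrib, ← hsdef]
    simp
    ring

end certificates

section data

/-- The mask of balanced patterns. -/
def balMask : Nat := 1438698822182607972395211302776094720

/-- Integer certificates: number of rows, mask, scale, denominator, factor, inverse. -/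
def certTab : List (Nat × Nat × Int × Int × List (List Int) × List (List Int)) := [
  (2, 1, 5, 3,
    [[2, 1], [1, 2]],
    [[2, -1], [-1, 2]]),
  (4, 16405, 335, 4655,
    [[18, -1, -1, 3], [-1, 18, -1, 3], [-1, -1, 18, 3], [3, 3, 3, 17]],
    [[271, 26, 26, -57], [26, 271, 26, -57], [26, 26, 271, -57], [-57, -57, -57, 304]]),
  (4, 17413, 27, 23,
    [[5, -1, 1, 0], [-1, 5, 0, 1], [1, 0, 5, 1], [0, 1, 1, 5]],
    [[5, 1, -1, 0], [1, 5, 0, -1], [-1, 0, 5, -1], [0, -1, -1, 5]]),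
  (5, 1363148885, 8739, 396481995,
    [[93, -2, -3, 7, -5], [-2, 93, 3, -7, 5], [-3, 3, 93, -6, 6], [7, -7, -6, 90, 21], [-5, 5, 6, 21, 90]],
    [[4314834, 42111, 90909, -402129, 325143], [42111, 4314834, -90909, 402129, -325143], [90909, -90909, 4315493, 357812, -361088], [-402129, 402129, 357812, 4767308, -1180907], [325143, -325143, -361088, -1180907, 4741100]]),
  (5, 1158676549, 749, 99904,
    [[27, -1, 1, 3, -3], [-1, 27, 1, 3, -3], [1, 1, 27, -3, 3], [3, 3, -3, 26, 6], [-3, -3, 3, 6, 26]],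
    [[3872, 304, -304, -672, 672], [304, 3872, -304, -672, 672], [-304, -304, 3872, 672, -672], [-672, -672, 672, 4361, -1239], [672, 672, -672, -1239, 4361]]),
  (5, 1078199317, 1006, 24292320,
    [[31, -5, 0, 4, 2], [-5, 30, -3, 3, 5], [0, -3, 31, 1, 4], [4, 3, 1, 31, 0], [2, 5, 4, 0, 31]],
    [[832368, 168480, 31284, -124716, -84912], [168480, 888160, 111280, -111280, -168480], [31284, 111280, 811807, -40993, -124716], [-124716, -111280, -40993, 811807, 31284], [-84912, -168480, -124716, 31284, 832368]]),
  (5, 1342181653, 151, 1155,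
    [[12, 1, -1, -1, 2], [1, 12, -1, -1, 2], [-1, -1, 12, 1, 2], [-1, -1, 1, 12, 2], [2, 2, 2, 2, 11]],
    [[102, -3, 11, 11, -22], [-3, 102, 11, 11, -22], [11, 11, 102, -3, -22], [11, 11, -3, 102, -22], [-22, -22, -22, -22, 121]]),
  (5, 1346375701, 1195, 5445552,
    [[34, 1, -5, 3, 2], [1, 34, -2, -3, 5], [-5, -2, 33, 3, 5], [3, -3, 3, 34, 3], [2, 5, 5, 3, 33]],
    [[166609, -2833, 28452, -16359, -12492], [-2833, 166609, 12492, 16359, -28452], [28452, 12492, 175776, -14364, -28944], [-16359, 16359, -14364, 165585, -14364], [-12492, -28452, -28944, -14364, 175776]]),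
  (6, 4919062190558807109, 51400, 29280618413944,
    [[226, -16, 5, 5, 3, 3], [-16, 226, 3, 3, 4, 4], [5, 3, 224, -9, 24, -21], [5, 3, -9, 224, -21, 24], [3, 4, 24, -21, 222, 31], [3, 4, -21, 24, 31, 222]],
    [[130406886547, 9374384864, -3140398540, -3140398540, -1657300409, -1657300409], [9374384864, 130353258072, -2006915588, -2006915588, -2148282372, -2148282372], [-3140398540, -2006915588, 134035168506, 2376471838, -16249329178, 14769735482], [-3140398540, -2006915588, 2376471838, 134035168506, 14769735482, -16249329178], [-1657300409, -2148282372, -16249329178, 14769735482, 138234135669, -22375688015], [-1657300409, -2148282372, 14769735482, -16249329178, -22375688015, 138234135669]]),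
  (6, 5836665392219557973, 20332, 1211418799800,
    [[142, 4, -10, 2, 2, 2], [4, 140, 1, -13, -13, 19], [-10, 1, 142, 1, 1, -1], [2, -13, 1, 141, 9, 14], [2, -13, 1, 9, 141, 14], [2, 19, -1, 14, 14, 139]],
    [[8586100292, -267550360, 608074896, -136581896, -136581896, -55081840], [-267550360, 9024052400, -105295080, 918460180, 918460180, -1415425000], [608074896, -105295080, 8576431248, -82241148, -82241148, 83911080], [-136581896, 918460180, -82241148, 8799495673, -377919477, -972387680], [-136581896, 918460180, -82241148, -377919477, 8799495673, -972387680], [-55081840, -1415425000, 83911080, -972387680, -972387680, 9105991400]]),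
  (6, 5788603557126164565, 66, 54,
    [[8, 0, -1, 1, 0, 0], [0, 8, 0, 0, -1, 1], [-1, 0, 8, 1, 0, 0], [1, 0, 1, 8, 0, 0], [0, -1, 0, 0, 8, 1], [0, 1, 0, 0, 1, 8]],
    [[7, 0, 1, -1, 0, 0], [0, 7, 0, 0, 1, -1], [1, 0, 7, -1, 0, 0], [-1, 0, -1, 7, 0, 0], [0, 1, 0, 0, 7, -1], [0, -1, 0, 0, -1, 7]]),
  (6, 6070852297696755713, 5601, 29303009175,
    [[74, -4, -4, 2, -8, 5], [-4, 74, -1, 4, 2, 2], [-4, -1, 74, 4, 2, 2], [2, 4, 4, 74, -5, 8], [-8, 2, 2, -5, 73, 13], [5, 2, 2, 8, 13, 73]],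
    [[406426065, 22262370, 22262370, -6020565, 49535640, -37218885], [22262370, 398975042, 8268253, -22262370, -8694180, -8694180], [22262370, 8268253, 398975042, -22262370, -8694180, -8694180], [-6020565, -22262370, -22262370, 406426065, 37218885, -49535640], [49535640, -8694180, -8694180, 37218885, 424575690, -82604610], [-37218885, -8694180, -8694180, -49535640, -82604610, 424575690]]),
  (6, 5836665117340861509, 8516, 26173516540,
    [[90, -4, 4, -7, -7, 15], [-4, 92, 0, -4, -4, -2], [4, 0, 92, 4, 4, 2], [-7, -4, 4, 91, 6, 9], [-7, -4, 4, 6, 91, 9], [15, -2, 2, 9, 9, 90]],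
    [[305877736, 14556930, -14556930, 28472620, 28472620, -56027172], [14556930, 286271245, -1776500, 12797430, 12797430, 1415420], [-14556930, -1776500, 286271245, -12797430, -12797430, -1415420], [28472620, 12797430, -12797430, 294991652, -12932072, -32382620], [28472620, 12797430, -12797430, -12932072, 294991652, -32382620], [-56027172, 1415420, -1415420, -32382620, -32382620, 306694144]]),
  (6, 6070922667513348161, 300, 2160,
    [[17, -2, -2, -1, -1, -1], [-2, 17, 2, 1, 1, 1], [-2, 2, 17, 1, 1, 1], [-1, 1, 1, 17, 2, 2], [-1, 1, 1, 2, 17, 2], [-1, 1, 1, 2, 2, 17]],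
    [[131, 13, 13, 5, 5, 5], [13, 131, -13, -5, -5, -5], [13, -13, 131, -5, -5, -5], [5, -5, -5, 131, -13, -13], [5, -5, -5, -13, 131, -13], [5, -5, -5, -13, -13, 131]]),
  (6, 4971974005797160005, 2580, 76462672,
    [[49, -8, 8, 1, 1, 1], [-8, 50, 2, -2, -2, -2], [8, 2, 50, 2, 2, 2], [1, -2, 2, 50, 4, 4], [1, -2, 2, 4, 50, 4], [1, -2, 2, 4, 4, 50]],
    [[1650480, 273884, -273884, -9568, -9568, -9568], [273884, 1584079, -113643, 53820, 53820, 53820], [-273884, -113643, 1584079, -53820, -53820, -53820], [-9568, 53820, -53820, 1551472, -110760, -110760], [-9568, 53820, -53820, -110760, 1551472, -110760], [-9568, 53820, -53820, -110760, -110760, 1551472]]),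
  (6, 5841186309154013189, 543, 313320,
    [[23, 3, -1, -1, -1, -1], [3, 23, -1, -1, -1, -1], [-1, -1, 23, 2, 2, 2], [-1, -1, 2, 23, 2, 2], [-1, -1, 2, 2, 23, 2], [-1, -1, 2, 2, 2, 23]],
    [[13923, -1743, 420, 420, 420, 420], [-1743, 13923, 420, 420, 420, 420], [420, 420, 13920, -1000, -1000, -1000], [420, 420, -1000, 13920, -1000, -1000], [420, 420, -1000, -1000, 13920, -1000], [420, 420, -1000, -1000, -1000, 13920]]),
  (6, 4612811918602929221, 2257, 1872866075,
    [[46, -6, 1, 1, -2, 9], [-6, 47, -2, -2, 0, 2], [1, -2, 47, 4, 2, 1], [1, -2, 4, 47, 2, 1], [-2, 0, 2, 2, 47, 6], [9, 2, 1, 1, 6, 46]],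
    [[43425184, 5884206, -561795, -561795, 3060826, -9126879], [5884206, 40859589, 1526930, 1526930, 511184, -3060826], [-561795, 1526930, 40280735, -3274290, -1526930, -561795], [-561795, 1526930, -3274290, 40280735, -1526930, -561795], [3060826, 511184, -1526930, -1526930, 40859589, -5884206], [-9126879, -3060826, -561795, -561795, -5884206, 43425184]]),
  (6, 4612811935514383429, 2657, 15648504112,
    [[50, -9, 1, 1, 5, 5], [-9, 50, -2, -2, 2, 2], [1, -2, 51, 4, 1, 1], [1, -2, 4, 51, 1, 1], [5, 2, 1, 1, 51, 5], [5, 2, 1, 1, 5, 51]],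
    [[330526560, 61815904, -2611696, -2611696, -31625736, -31625736], [61815904, 326414436, 11385092, 11385092, -17583546, -17583546], [-2611696, 11385092, 309385972, -23560924, -5277442, -5277442], [-2611696, 11385092, -23560924, 309385972, -5277442, -5277442], [-31625736, -17583546, -5277442, -5277442, 313451413, -26733459], [-31625736, -17583546, -5277442, -5277442, -26733459, 313451413]]),
  (7, 113338840419466318013506055952666722389, 1317, 866880,
    [[36, -4, 1, 1, 1, -1, -1], [-4, 36, -1, -1, -1, 1, 1], [1, -1, 36, -1, -1, 1, 1], [1, -1, -1, 36, 4, 1, 1], [1, -1, -1, 4, 36, 1, 1], [-1, 1, 1, 1, 1, 36, 4], [-1, 1, 1, 1, 1, 4, 36]],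
    [[24457, 2633, -672, -592, -592, 592, 592], [2633, 24457, 672, 592, 592, -592, -592], [-672, 672, 24192, 672, 672, -672, -672], [-592, 592, 672, 24457, -2633, -592, -592], [-592, 592, 672, -2633, 24457, -592, -592], [592, -592, -672, -592, -592, 24457, -2633], [592, -592, -672, -592, -592, -2633, 24457]]),
  (7, 111987544846435289103485767819513042261, 6177, 745452963,
    [[78, -5, -4, -4, 4, 4, 2], [-5, 78, -4, -4, 4, 4, 2], [-4, -4, 78, -5, 4, 4, 2], [-4, -4, -5, 78, 4, 4, 2], [4, 4, 4, 4, 77, -6, 10], [4, 4, 4, 4, -6, 77, 10], [2, 2, 2, 2, 10, 10, 77]],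
    [[9742298, 760937, 650056, 650056, -645408, -645408, -138942], [760937, 9742298, 650056, 650056, -645408, -645408, -138942], [650056, 650056, 9742298, 760937, -645408, -645408, -138942], [650056, 650056, 760937, 9742298, -645408, -645408, -138942], [-645408, -645408, -645408, -645408, 10080855, 1099494, -1384938], [-645408, -645408, -645408, -645408, 1099494, 10080855, -1384938], [-138942, -138942, -138942, -138942, -1384938, -1384938, 10055367]]),
  (7, 111656860438942042157744631612111328597, 4700, 13721793840,
    [[67, -3, -3, -5, 9, 2, 2], [-3, 68, -4, -3, -2, 3, 3], [-3, -4, 68, -3, -2, 3, 3], [-5, -3, -3, 67, 9, 2, 2], [9, -2, -2, 9, 67, 1, 1], [2, 3, 3, 2, 1, 68, 7], [2, 3, 3, 2, 1, 7, 68]],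
    [[211829027, 10597164, 10597164, 21248557, -30477552, -6656808, -6656808], [10597164, 204485603, 13905133, 10597164, 3951336, -9353496, -9353496], [10597164, 13905133, 204485603, 10597164, 3951336, -9353496, -9353496], [21248557, 10597164, 10597164, 211829027, -30477552, -6656808, -6656808], [-30477552, 3951336, 3951336, -30477552, 213272592, -1534272, -1534272], [-6656808, -9353496, -9353496, -6656808, -1534272, 205076112, -19871328], [-6656808, -9353496, -9353496, -6656808, -1534272, -19871328, 205076112]])]

/-- Representatives on 1 rows, with packed case tables. -/
def levA : List (List Nat × Nat) := [
  ([0, 0, 0, 0, 0, 0, 0],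
    782776610567810442000079516082224851299663195574080328453637725035886894893544444003443589513316234029162188137424178822203354701884966209339711558135977183030293302375175950251445579437381753357388938810762667573732870773612547567696486999871778255227752123828318466536651982534352245349181075651740662452050751804845897643179648084491416183450721245707507995581951987400282740545257220299740101119879128473956156400422478306937136166660017593530232799291104006201066436872302454933579547558559245204362439736942688469679772951458273758662792773785426167833979966654131170750057759238449873822792606854462016843168255500477561731445465058306789918529052220024080515597657546049948016419340289)]

/-- Representatives on 2 rows, with packed case tables. -/
def levB : List (List Nat × Nat) := [
  ([0, 0, 0, 0, 0, 0, 2],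
    782776617537928159476319245072583985563820087086602626246921209863104163271776654125058981527723499304844325641614151647612879328031225621493283852869323050028767925706650288705225490935679632244637095781265556426646468170114373634672757868940728148132556910341727718064261100771299151952651903589550837153694807415296487888630969676248544841726138492922601193562601883045529969537579555458832267903555743706076823082038961478700861090677071120701647466052867311478435915283660852257720942341046817131098634109149833205518052904982077899736657660031102764629941488532566419688512346678854016251766831661219319074375346063468469833969045656432479594232299291332795765223369486247231375958212609),
  ([0, 0, 0, 0, 0, 2, 2],
    782776617592382570607101378367942586068175100730984864005136575848949392705826695281541648199991477992044093546507065693618789674183289110208949127902563537904056097851062386819599078507190097355633413491381003823467041926397553715527631464294274244451999865751464704537952142890443822229239041621783176618953434431662652480727454574230713667402392114172164348732083334326246008056372497847021185494788212357599656792268592410693874519364518394637880413724584518793718626378461606041229707913200071265679439615294689629686570872309536954816428327545940873850926856534863309320891907812722721734124720841206193455011130825123965808610898311745980667906467732250535081300891270536849321777299457),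
  ([0, 0, 0, 0, 2, 2, 2],
    782776617646836163765616507190514513632676771664624360093004085508004136487642693973805908845122822316857843947258784872250630544833717973151462661275621596809502819839414484726217972228331000136596471281602713767957312077940253667122258936430435921667780031774975700284030824893629086289811512165545522322900963782880839479798856605302613316484054563515784351044906186423902508267000542342446993565396654911949369115899563168333980819161866907348205158528659893485711902868534732368469919029397471432221034939802142315033077237495114057523396091830224098223656231738912065807494585995123623133945877460986786291188978867225211871920229334644884160317852144667702753461113808709353538383904769)]

/-- Representatives on 3 rows, with packed case tables. -/
def levC : List (List Nat × Nat) := [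
  ([0, 0, 0, 0, 0, 2, 4],
    782123989808137762297588600622874394542216856235465515792447809131709126999613267238520027864877464850819525368360354170686408270334296955281647407311983739398551568863449338645994104508615207481933902111759723512216136640607384915518307444090527123002408801309440283240992996920812183159526730612333448250922274796089472705106794842757502545755431263090515875355248120511588480434773572452142099654165365702068445107537346198922771088949451627713777905397732458848205576728569904417433543970196060455836446966961690879747105769055041817443593072999442153054260464511271698573781828892164925525277686152242733482237862238092999222410479658844640209915514515270598617534473040388957814758506497),
  ([0, 0, 0, 0, 2, 2, 4],
    782123989808137762297588600622874394542216856235465515792447809131709126999613357422359156177284049341700552051307355441542171321526657326341446609340392881830616808898975223131713984668370680129497144102748221787468549569323757020502258438396724217432075943128556069990195580539276639697548412016239089724312184742821618551134269370721154658203178747352085052921446994452572161142265715211327330581919645358023405872459097301018993105345660871119259352566616678484930232862606106468813155950776666189025841841886160959051655849193756709895125458338355295660020207937051495191022827211993310874259157163304103565229695349205241275581018563134285247349375751742783733474313019080013224648310785),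
  ([0, 0, 0, 2, 2, 2, 4],
    782123989808137762297588600622874396553383673661236557251209918725060918737557890823664480622978726677472707421273889404035969141782106724392789678502996973767981809759829673306026472690882272103187153066206254252249308794478093650943033949680487667057943286024424862352118298189080525640922921633696334257105070924991824646641995422070722260200550571414898405115483922926060737628276633105273182574382618834850954748807976905854483668583703879578870842396027104954530626143616272791493127271958120065704537579625435541114413536667731153729972185874325222309016478294016034258290895560664841344713917473654849516079000932662245425508328071171808210784152681231003212887573626344558163617579009),
  ([0, 0, 0, 2, 2, 4, 4],
    782123989808137762297588600622874396553383673669078469210240808421681421561056986057707415324380718576114737958177725551568144106657461850644548650295095833770705517819516369383305871615823542951367691928980635716157023864258617140372562623992678009993941472372524798955728081912356865475819893877082618652747913574170122549967678108066527502758749379168238834750136537485985830916650184085008508024276373215334419318197861559400791757876547974653999130627024558596500557181943694693458742052994151569273303356610935505154632179100316355423620761515071239889774763900945044693247769303209823572302178716233915527663999787128001896442134427545240598186458806331979885036084611930352126169645057),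
  ([0, 0, 0, 0, 2, 4, 6],
    782776631478161049792068214373843309200580482419877967748013807366241640382657537731663837498531323548348554855202425045106102750011694258548950553531836481448576084652273243538588739056244867859320912196990054786436268202037280390359642838500979359266664420381835356017715511718927990586121971383888647387473676185991706852948665194230865323800799410017627420136200253986248790201428039339535253284198720020215085547763710312889033773347476388483194866673183770014989464107035944318288688125468536430221854328829933476520988044356070252512631039810183593521829691998638512728977177672756931339579844951972138893576536215720210621564419571837887754250473203055494631226515514146106373231542273),
  ([0, 0, 0, 2, 2, 4, 6],
    782776631532618732906215236859512436389639455025049763758330515337468065356783237033623024601830962785594482731205283429009094217593599926775371942610416549354515139699317194863172915559578778683362812892878006818660326385698937862020890658748061240885131008172105872200241917205736735636453295146558285015629805739943035273228421421352583272122518673150109302571517599969045127098826716110600665246459650364766408785901475677767114086858482135815214815051438933341781409130193084097607950977115618587887479327710651570012370373551561279920639092934131165556732635904330444664732176601207996013484968321177454042803282910616093783082157850400349588281686267863799314574955625732120034553823233),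
  ([0, 0, 2, 2, 4, 4, 6],
    782776638611644909092337011878251513165231944311062735981092331328363714092218820707337862741708408821124222107642754266701926538751379719798802334373715572531191045985071489737221876063038812502759967786438430236278790394969533263660447237355358071302378387456999391342643795267616292945300503071466846371308721055056771876874407995232351072609108774163437834324548283343181089900056202923879520345462413238708059783506902622511899438954446885783325529604520165234813957276477967160781289579677241510964735110851437106527956281422947657701506171582684717337764402381602518174996332576664753753451849445301939861594065161093386691235174937992379253418990876280149590086910084053968055226269697)]

/-- Representatives on 4 rows, with packed case tables. -/
def levD : List (List Nat × Nat) := [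
  ([0, 0, 0, 2, 4, 6, 8],
    778501758843752933451539555228378978886777087932660122004747575542511441641969366318746580585115486761008579741065338587188240972112479004257247202284692176461378867879929078709187180238260514056358849084947749273901821759789390814550237509146520236582276473750703964359934171101948321391548140442734173311573311066418130296752729660704951890780147284115528775752102542750872395459808618476423290647605342121846044433802520413796473192023057521768457094353232160992594910458618497727675954573838791466884603598011661580819590508729588178228701191262552435765914817008555360816195680546503986732252688623679270833575624114748146549071593881195590860891025308160304318037064401999002065934483457),
  ([0, 0, 2, 2, 4, 6, 8],
    778501758843752933451539168403562793925379143612194402012607186888495610978239952589283851406788977459849217836774017156950330811934811294827141712313977319586629620342653855670125298585343470822042084993212900785803294722021825569344017880784799648524012910892182574888456710452234902280036373308148035142066902334578618741642456316619193468396111861504227854378256150397910303258119722020067099850312520559888000720055944702040774111995545550073315508399764937041136225498048164260228390869948317478106704887367318119093408528175941819369294077856800448538236918466176698938980405549152926025334508277073845731846183988270952775845902827518139133269336963201806327359352410058025345414332417),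
  ([0, 0, 0, 2, 4, 6, 10],
    776675030297058860283488959059603287453238956463890908834801257487947136671424107703088631768267686609799611259510057864592176992317178456404402130537787271560446586161199663625109343640513692775149357376483136883289500151038611541054856809989668484972649540216783729659826375483644383981406364909229792166693411777337570173218213959253603839835545709026256383362477057628372095493527383559238233232223701359414418290061359856170393573771651895119855787327359570428344484541299574616671465956576834545511356031015873270336551292292195872277196324227389908052488307857890382017830795394868126438576798582621573266680726669570785500178215119278660076190356719775962613914037305316965858625191937),
  ([0, 0, 2, 4, 6, 6, 10],
    776675030297124385268059226649034568953580786222720865042844506611046875758575171795901343920552730039124024965420643666287658318065885431136111348217678902795805593287250694733863863695851387091372195272156584842221827232125265042352974142643107399268191923945019532197512206154830540033440265096239267451506133127231568829506081845032827649258916823266149585941963692882787344068420024131729313098542586744475516302233334651995109935468034837280986685333450153673067976893228254346666170573207642616115708401683180215720691397514798874412542483545978398309400271858229751742579089233318514533779040069521552930072531281275600556283085457879755933883641930853753297498160144909183439587770369),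
  ([0, 0, 2, 4, 6, 6, 8],
    778501758843752933451539168403562796638973416020476480906181154399703453220572148401149137892488954907025901592964108134684679086468737430217796303732882441331744859656785562096967560411106851147184868981245400956654024170993455705710684431966233179124525881391768057311187355471322925618067055217401628031311657426600099407435210724674997135320609919765543958797142539114778571566728026475296491607889564033610448382704888485610056309204302304579475153935000902839703732147551385824286462258746103323932782893036375019878828232324881120752763934763988349286539340767987085738785153845614932073141643216444271875638245581580296671097026849080889048950485905782107342452850842894003896461295617),
  ([0, 0, 2, 2, 4, 8, 12],
    780325364777546674870583910458499632876969081403401531358463337112816622977956977111784137865481520308428490159582041451290919445160859043851883011485285233925908871696921432811186811761294405149214038512186152960045272754618911533474485999623871963601721084332136515296859645938360530505159340808779212454349649475072238476956846860734907371691472370909100506363831248758840529393044455978467122531695626978825302181996987556928303250224834626547146453297955125341309011129268712243846564710669234714402432123630984172659202359825170650701788576165711975039031377642095235503539374339509796970684283082271847520416925042534470519452526266306823157290081507694073400198848281900304799198085121),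
  ([0, 0, 2, 4, 6, 10, 10],
    776675030297124385268059226649034568953580786222720865042844506611046875758575171795901343920552730039124024964932637335076815277767589090236513937809094700781470324929328025905734402098470185783203139951396115862681843816267695478057346479602886323513671756984108891563145105007308452462424571248578405903380949580280694999497712987592048380055290768708782650149276608635953448725802676775600315226064621174243620779504174624498625721930433013485271732395203182717026469254123638250015773401166655371572596715106739591625961046910281017703628328242189364662467843448897378903232317952713522082625264355496821137001226162217321858888228549960613728699778403096410973489976927504983385269075969),
  ([0, 0, 0, 2, 4, 10, 12],
    780325364777546674870584936702849087326509357165907895898134551646726761633453031215246308827807304605873431529644585148319357098595769381407862083010010411489482598595244547439148311217225066970042116721516938363535045116718756377710319989609605509034240869027650942163236965412099114072822119257785489212242468201881366277844384762555056662692587710349981195916223841153802778416275387884377873899337206370566401547437638515301771284426291802971850773695269721830244908021028089597155619577010786199671956572628523572692464780181950100092075450407326009376813913344135419128084041044235841056487277178958378030555732775748223202973962742137120369161560153360955950913263629900431254119776257),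
  ([0, 0, 2, 4, 6, 8, 10],
    776675030297058860283488959059603276291378028892211987815748856834290101626917592645480000163797197101089261398955904854483327053874242382373627902925593091051629973913077193597807367805861713551911999732450966636121171290142558401304309902137128967110654553429551724608157060614947465307596653200920148789446263004670645849293852425059585924189839215359392678325966963144371692828733253979334320092198249732178700787167651529209063421559477722757451877417479159439722872659170179478487171052632798414129180183456717754832940824409514972215189841906176712874675493017107144111782025112876359448448124022923677366562096945768498023351840518865197805442953943821184715458978152543016277672460289),
  ([0, 0, 0, 0, 6, 10, 12],
    775728941428229165230946016369668119338636113225188084502975783574820368503748345185484530810382239256656132810915674171582398287807914160370105689697647263653820328636168064039766242620258569825579304672473482419311575494955452908295627428850625227959593616923774458401374369943595267075651867612285021674862226749371657957624262097044273107708549641603336340167509704611164584887727451586243126545394094373467384558851608775295225727637234667827249879836478291057068265287652573102809951072045837731159393281014603071688726794787975737606448309097589158412994977604207675120770835874088557472652076480871764617107104390867371368391520738807254027047989314412953281936035324718394399722831873),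
  ([0, 0, 0, 2, 6, 10, 12],
    775728941428229165230946016369668136129452725291286875180326482494967986511880487401647003524268123303633279879614559751887670301184531959183007701493870314319056127735259724600081561976505480017722139379773805313819765893494943070057332157695361382953813663128527671029441971912468635979160357289183751548033524523970319757966149748032712750102409248093680527932943573614877375609708522949643810524841647105711228190217110166943753805740405544357986800379012874161328263886001329646929365389555317704969624461922078877166783059805488482339438784839563124157659275697988696405109491610066936799411896796145872126377499928162314218313202241662158253813046734880115631955173884020252023523639297),
  ([0, 0, 2, 2, 4, 8, 14],
    782124052648108587193625425300576598166232741300406803268582921849661356583715490646338025661334647257961483185201630697518866837851755557965578068404402359328043419124262220397834388248243085432650135786565753432351266970926677860149034628370489618911322007767706541967772273870110297208468180869913804610145571329523029227602528942399449583324266552644140047614767182128519301883425870043465239833510945380676165008349752084274563693842149248982335979990742652639770493486000554102222111673090016426418911026081042581698417249686139725766967779428918231383332418988692889520837022568272226589662012615712999641245160775924442793313105136373746767008615045928238306226230780981119713345798145),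
  ([0, 0, 0, 2, 4, 8, 14],
    782124052648108587193625710307535887668240117744566450870515638106629199496635201166736653516044394876263673697369100248255653878635868570385248666977959818483129469922535676494394501418750430258390392035485608651846480112113573789196310286911185627116157816698646465980026868153051797805766343395256984022735097953598228462108223237228639254414135707750874147892224616757668163615743548866264948304672038467019960584337124794412127840272166829587083654094232734933368127095057322410293636650765474580923151797661915205689243292953537564898293712907298018505496339262372582280436217773094834949782884803394991245579613131690060110793876393592514133908343182976621377327855203160784314829635585),
  ([0, 0, 2, 4, 6, 10, 12],
    775728941428308457620535281949294191903637596704933142616331695847005477625321132058008694105104732021043528693142861724858402702016654813911338529599324083007052365736193801679230829507564439127183656373944424362622429415644793799842952915964305737426792183722925896353201812074440454597733247899771677991421288938288410263083631549445086898542469148114490506836890555614837468613234216674705755969805078525840715847388866511980309060199320366542665664888635124650802403203240066075273843786265516660363914614880771534669330030399733469794158460262646521238283348623250522405211254450035946656649512845438990906865141970193054791205963087591346122183939609994003267448515175342396590638497793),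
  ([0, 0, 2, 4, 6, 8, 14],
    782099071744905933201583358608675427517815203095223906105671281464605280273490442578922762403455757754479291403789943234314372280292229854457139182984875116347743423463134494581315408109842326894974144962381820427982885143691247281947534247527498011606041068696415893247393121152752080000119154982739352276748969829189035285209041602825098825638433921909652599086550187683995562848018337631901686443271854645693290764186156368365085522391721483838893110211987891949758261150836091022061665217528826111292099231268356915421419399309655986008812826775325163359005406536595359136028052293429666606280479856847837406486365454194512365981039101109971552035866723292499894690715292952111454324785153),
  ([0, 0, 0, 6, 6, 10, 12],
    775728941428229165230946016369668136129452725291286894711430607977040481914452800876846793787691807216789761432938638149965953631688185940463176390587299303156780158043930535486090472648875653467689252996529097739506470730663031149042634949266669520007349985870729006150316890212690626275197329283182205270796808658116809710732218640686003071761345866704118851560968262069486553908106281269926089550801231089253875267247953423946373146583025465154506707448320673562356909602819069580928016773958815406499423860383164013232982150729691572924883886755947589367052516945117123331562889091423045188659144942177165641326503900229375290739984852379578862467818659418174685320166984558825324703121409),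
  ([0, 0, 2, 6, 6, 10, 12],
    775728941428308457620535281952234620640978346392016348860302730279265689374626854755641244700227384356829488299292211287492262651830155893417167215769196103360432766970979968886805133828441127770114891086367822524416509457073724477477119733904742470565265309308787814658020427608507761992380760763019356727404754097078254094391546272694137588697356805417334694570854474038951929981117592598775745395493408919534453707043135578532560512738666126511512316749036967864290491726590827486411405408276737160293246832264555162045740252597664306590862916689580011158877142583620764760197075319287976050026350869138663012157017318409575102823533016260876618441762834691863962743031830782769243634794497),
  ([0, 2, 4, 6, 8, 10, 12],
    782124045732378074580493621542566394367682644592295389340282960246383925382504190755196952443216026765388374958664322576695800925445502149796861536528576350408680802964479097664476737277880524214980915240099583478785264834413749176354662584926339275489920840984088481937603181986056040233808085303272691500516894790646595409354130765546787280283133338393860810383198925909063370398855977660563216927826910703959486395751428172001021366491156381316000837572987491156955247907042475029921872354944221479339150851273257521148820947306843959268821738208300267946913735586803678198786436206798690893560205554582484819680210941908962405340014054300858842419117593182301809963155268602229917269884929),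
  ([0, 0, 6, 6, 10, 10, 12],
    775728941428308457620534755603809650511003289902754533189405365425097565881083057329295849808168689494339028421708622273002723872731469236510255833646346982783956514203603220359003368057554245856020779170292043916550520827740135475987045171412664370037671884269822997959397445586269886242354230069082037950848769823052824773412729647929361645156328338182451589473473658699876849076944184111762846709425733429410029824056426536559780148041265828820952246462969310621185940255785663151044466749072392301219865558909019750189022976737816517460852347971289709763106019363921942398042752878888609700151847762960129905247044301828167846699115762193017291004017278436397795527997657597795772880650241)]

/-- Representatives on 5 rows, with packed case tables. -/
def levE : List (List Nat × Nat) := [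
  ([0, 0, 2, 6, 12, 20, 24],
    763912911373403002099166679418072060498412753615258871620980153673059858618069189304010071673290424828266714705744673817624633245575542156847762402990317150636568452543237528275045571452524231755855214584555202195024616088831560976762476004051415636649436450991075241089845905586963343030978200296046297711069398181852312061303419740221018036206521405734417441611549453250004422452809839281326160480077302982351238617740727705317350342712591382175791172569078588164563930757130450278439811900471602923312483051450340645243362181993515414471656312503909735289902256503549822438581270662178260573127010365060704227053279571132953204746395104264541550532477262575907470018755419733437729873920001),
  ([0, 2, 4, 6, 8, 16, 26],
    762086182826708928931121258105726018175173023960750783553295103200753428286571271372991162876740793808957776606019441451407517606456993322013840166974844657047327367523235881365922561026520788229169811997951980627690426367610707388344078272057014736757465278718342469403041937837095921770368563898208176801775426056536720546898096118081202372475733906408416221890719788987673749369394465335308533155571535961650266636252428708523205450299196014956777558316029355477175945107836791598877290424949115938909406034047812173044585823683042446441096971658453964159618839555865300648835836286234440690685328252318308762278456499080207940835905773415674876877708700503640704303789144712988727846961153),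
  ([0, 0, 6, 10, 12, 18, 22],
    732855403467197223461066949281359332962411956358815751040830606207340816317854515601964553068955984677971190379706000895595601346251633337591899752805272298317904239365633435753388128410987337783660268435403175618023108807285464836802234855503584155886580950494186067847633854076880211622672996661619925962358008700847928663952083956625462045342589405764112826413060501641590746559445561274649019358216582864759711231015739451594763094031630133500119275266124394975710843264657969559172719563731537659675963512882964250157568762111143090334290142888443012112017237923759307471184715547415024412317658646432594289938391337325614986617272540549293259592368620500100933091797777178683401420210177),
  ([0, 2, 4, 8, 14, 18, 22],
    732855403466703426493317958687075191797521327358825131320189956290066435394902834626699888944977769522489351759601261131613922301975294169716587956684141594656579832346493967037954267019488520078449746898482202444294673771243774011664180007674157866267535310884662041011070805840166971587304774933638257817431866522461355924628219854870373337629408031410319335244480627019430912329695191331162183550120678903484526854617311891721045405863004731097112390920858792249234082734875261037274272236440796778469257904073473835232483835880216250736043732478891757044146499119303595295249277614133187734725279345116994417014573326790145775135426757379353024861789961988280276002933718888480419949117441),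
  ([0, 0, 2, 4, 10, 22, 24],
    762086182826708928931125907263842430405295701949213750997243560821721730690057600905240107727694060933533342646605833775798460082620921125925041072369523970027404840508332838798520265265158903734199090254014646863812805582337648515111662091424465783418523475028520117488145696089090395912971840830870778981811512732147275391257473989779492010505470097577429880706099249567486909122550006015876891126253629540003461902559351834174276243832397508468918160133566194175133944491294760371125781489166554040327721380652158291882978078587409076696015730620699568929934562829585939053560168763835919875455525671655838412990835326929252422947039900304181801170060547353727784736477672753612901564874753),
  ([0, 0, 6, 10, 12, 18, 20],
    732855403467197223461066949281359332962411955693287367790994242706348721659885842523254786972743203265930227326034586336223177966652992952953398030436450495020486576234446694143913876888046455905704855056006979210517429014494610937529528133915388760724090291029005229575980994719260807998940723164328220928186764981591666707197326363529150925115536090382109294906886837932400956582495758364294985946105037948286953992632307920773474131834642609822994629067714276639416853806545687222890785402089775404916807284899294099311215497347114151074722841189983327924076176066664236580046094494164033083471486416748330160239390608847491528160239613033705933410902345839863717459613609602595365392809985),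
  ([0, 2, 4, 8, 14, 16, 22],
    732855403466703426493311153869125546051748357747200056337269830413185536115002827356025234080642886063621598001971686274240154703131090312218406129111576838750163747322907244376861157982102570845004130903254181846226816623131429783292537863117020620146885652186654347075241876019492489463747785234869024800142512757332502031922126862142197847761592168620819000557530782087473877599776786899904060322769980843017564257080515603026390528920990623237528789955867875459616612961070763637560709014910007168169445108023459420076470757883542344270009860997666809325032076369811751950088080756755148194396456062298159131043203032288836214158747538678840887296148580366748413106791770783953701753913345),
  ([0, 2, 4, 8, 14, 18, 20],
    732855403466703426493311153869125546051748358289507125709342170020587078060353410952499982674383646720155448676236511434530541412119069806495132838656607150176613452070446606922864810310641841713361693774957378169965777378190173425051676360635358530503195841123948107130257719100866538185767893831742319648323549098890646255292510890314857865719944388080013075916923381490436673013046002168899491721915784177008907383782843884798336819728614212031384101343333516899018762397591886464834843053309162357348163121153832255534219772826732750781377468895342712114408487139892195759431862667354978798467453230136162985562023763723397851630777761504517894684291048926607075770708488515568426172612609),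
  ([0, 0, 2, 12, 14, 20, 24],
    749299082999850416754765004666395897717649658516977091748389184510792027082200630408926771510692057942190079613792281428504723407344477726824728741472468122127945233011639661462427586048756545941658841761634435233414299359156064022552065098375511594437228740147806745874178457758575579394652564350330402930939138121407474465139030508813118835121704091845245505239536920437748758036088982568277848314100443921568034937881744305040375022624756658292330625324225016052367342235802931781961483117015248641425218984431661283962123656970375528049410682342207870745035179585257612256053524074139377075945894303049011910380865679783717439786801777342284577302903295779340681099409759507018861605879809),
  ([0, 0, 2, 4, 14, 22, 24],
    769308849305147089276213638228507101535575135539179865096292676097205076088702238416657726079837230661555620145712142783851228989127926104356054736610489924908593171697598796328174743515831067852797405102914314222281158265441822857619323508223163240396472799919741772921066796357447962239449344704564100612503314646703578249187679580141753874497357593966609193271288873707953340966900403914709507262504568759387458653974659372220168184591445359088059523663776050661185299079620588106911775798592041107944449065882408146572657944356847897975488774905429584838782143976453256423660568433693140189357554992587705024807432634215750194686681464125532401177973958679853232945136941854567890101796865),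
  ([0, 0, 2, 6, 12, 20, 26],
    761339941183579758204495204298255385364141741716929597317100432838721858518021290970083916618313073752219546549155889716303782135313622840440004742578510953520894439954858498833016173408107373681414586561615050813189466680146439741018381507841276507225731313646810502994091210694701024183189834215087294355425505996277620167445645093255091964662087837090697236278956648584385113073592563213558968189897392322227204368810660113970096345486162566208191829278367598918650693912464534667367352186116831426363104610270934229178994557750360607107509512930944754420411977538559021083247945899522240575807104750038368768733278428783541084964246709347727299709286056100824957874144727484063742520262657),
  ([0, 0, 0, 6, 10, 18, 28],
    761339941183500465814916705009465657387843713096302419286503897487738819719392302719746180862781342461026284232414181330340690581335434918033421717492303907816394350867854326247239179310850444812198610070524265971137938845714497156658862617184593913866921467401220294932476791712151666686824572050421307128532237545689649675683279544178729318207523103254540003714925708663248038254570320108559952325665596026569906801317721289957824705535057935434600602453903911005649932459539944560226418516959035064948815135999578828550745607294909995140646793945006223515885318236162009373563469475011735054066968110821511727070042292457333116844672737191993398485596832489520921296525195791627294031544321),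
  ([0, 2, 4, 6, 8, 16, 30],
    769308849304509793301239431277117556663463443121088730050665734160973500607331143330298995812653101736593264892250050362599961272634991600329844535427883561704024819886377049620442791896828949220193883166356279834977326556249707817981395975558003990289136555802817638205538422342513674466177561573258674031136290420602337089051964633596773797231159216851005020710903255521757172236527543448628682215692880362038212260052591934281284806399717637056094568520981417970619670651482814198043196729366283687562665071140526153130330899182874900721412502779281587717527175075144548837406052316864317756910239839157483852518255193382723154608365518499827209400322354623228643161886318722727293282484225),
  ([0, 0, 6, 6, 10, 18, 28],
    761339941183579758204493546601700634766595571971792660175666448199339873070563738724419787204373975791084034718533268058300298362111808767200200583265360442050615602311662466548470161189725593484416881172102626606977105446774163744677894314664214859148923847914587529109966488507474359484146427025829557370439857036779525246622673138241471497511676303849747290973572858048870203993144810160067444270034946393768591966023154541711375993024190881058798775034761652491795094044704409633531725366544001788324111315954210967751654795995453935941405417040895805196649383268008427252234076431780242769339457982094362256070578366613957559134514419200663870673628021274521086460284143878569380314677249),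
  ([0, 0, 2, 6, 10, 18, 28],
    761339941183579758204496897070100430177636122790289990500096579928160082766636715500918313280107204044653246257078106421966041266581842722704493525820015657298614997388838597978379792418558962597348444644791313377836637177783009650870338321312604798984023151203677062426860954815414998963716606582773070608993923263263839949028531426904391739265304346075901313032379931751849214998735241827299462300883676811215527627542654929142521389623278706164834229656136239961262196084890421716181632911093320742066327341180084831511925241394390338038418243675891396164977525548674208302272701046107434106495367430324489002102920035823146694995657095871158051172950944848632843627332665986511491090415617),
  ([0, 0, 2, 4, 8, 16, 30],
    769333830208349743268257043264884926114506718188849730871337810275382311152067283583857608514169911853433176642417057648474568505283471302631884677521741706020688249538039493149745523937393075046251973484989304883440724542186396170253328848789799122078041133518479245712138892250344137188442437250115473238113824001209789127558758351938265580122588705167503674665868539127848009702251932277136084208125203674890213246061989522751025900981256263795791147436054200501111999185993652949213529146388831331769139357166172953208837861586146809463830628871858774784409062418346341127451015159961888543654546907032231940535754596849149995436049360940779268649952061035564241227351295597337875263062017),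
  ([0, 2, 4, 10, 12, 22, 24],
    754744982738122363183794823118920287593575577009638945793645961498931917576947097656398768807017312492976526107617075915101235212940352938466862550993803698372593380966029585265928741679335382586410860655702120097951146302032103136120578032723918270446717353328148801283337791139362535701352440279277464816427767866348561213193842170150875436360216580841936876829838360561931758251833388367189125163358001499357469781220412177754679253191695802269075124292055605035748170631327382650800595050829298341273618224160168486631457881408232844107076098504806993206797298236677540346340428290406149614342746810752949469784234448930160432222275995938157932363118543036827478415196324218604210520653825),
  ([0, 0, 6, 10, 12, 18, 28],
    761339941183579758204496305906219937072542099946339355677470209092879727003476464880728573213081865761977444136300042583680560955476268538555083405983844854192687454755634414851635996996033352148179099624618031805287549216404134401358715962631318202468112190563933626923793236203959290108973000899721896151536646324219971083905457776487467270335675795459829688744007622865688612280676256216790118288734563674244955361912599028234353663048595979749305567252969259154732108120868363857254680033340276351089380412792295708613573831416506978255953006818046261985096904208952983534261760767945834399250130804414411472689010168290492242974775209752116584908340559073387789655447769079417153690337281),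
  ([0, 2, 4, 8, 14, 18, 28],
    769333830207711720253314952121469750755238990104633376688983111577126657651205593259000918982674227892467849010753919417063804375611496624350626168252549076290542774978521309412667102735978611001621747876382493698257974300580839261635592232640061612031785771163725103668731046870130296582507502240554718963369821485265468385623000616345834085393757133895184417044640848761047287667159329984763052513844266682910324590079515025155288829768420438899718867100127005897537472763117227126893744210073614763233468400295555475505424667225767104733805141563830327414232414114512534944821064034295482093270041731268582845897925576206476229654289046886054321277167214963576000843733281535528627054903297),
  ([0, 2, 12, 14, 20, 22, 24],
    769308849305057708392430694720918755614616540206247247007808023705123120294185871982193278956079841795984471542868516155125881104198055256780326452040978250918779733875675636410533385184892157362528386840044574358326191141544978258677154296933129250942890505014527116479659290384018003337043515950775664576386320333068182319541762128802590474832076567709125583818037345252016664471275119200189813824061332717675685673215788795381771306925546583410083453045641750745178776791218186651221513560996754248196593843507774995916042391451142327340620302508342796444774175417247334619944960524044232846642223494611777422557791796280288223473271514974656704937006207200670172587470973961409023653511169)]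

/-- Representatives on 6 rows, with packed case tables. -/
def levF : List (List Nat × Nat) := [
  ([0, 2, 12, 20, 26, 38, 40],
    382070438085983052770600719831918046830772424601854047832437049621604048043328065532716430213093563035746373436285269803107783316806519511916994555665161824458374325017416515815401565139453989977051898072014121693664813800927364755152838535526662746517664333362313737092408474132172405819614223722559570546428652567714614562714881246906393927790014746864310646362188241253194570791727487501636318602711903552544946222287851575380600893305417724422199957075698978177071348007977951393581583886214435649058677477226772321188326054144818654581577216812963850682302371480801794934987508377669413072516736194045833388908677436365375484068442328108943286636998507776540451895827831372943961646563329),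
  ([0, 2, 12, 20, 26, 40, 54],
    639632980780269502576418966748883906088807592659899889105384153022331316718545714002521616159203255434781959386026082196319339045986387224196514895542985347902294339215716752397612162540904754434319982521026007020923871232050445226022570466523548009779170466769005917695909312657811427384535600063706442191585653687773174352561537654751167504654578404730147556092223147728426313927290324099058069135313141447445712705111470398458668144134322685528532961629448426629841130636200505340061259566031583612901910918120862689497731258008027944652029685791185247138184368026803214129420706487590463682005315816934075609117110178035663289872747417123766524382799936620037564939397224764594021450252289),
  ([0, 2, 4, 8, 30, 46, 48],
    654221828249882124925075191832169832615356931806254524794935683235529769122226114948520092557386833065669157950371451290010262078838067483385163350657690722921869142213634700876472454746149452548673374450812387297494577669733826921714698257145692511621833551155907484677387282059581103402890484666406359896723086975198225383800420120174777633203124647602396763751225685205389177051496596919812076261840070293189251388456664377776918504941040024964382348992626170454606362589590915974833945306765573455988959536243352011938021922288031019154744827633712638816028494731938565165992890980978043673110769383491325703155237019400172944936322973697125465943925742806441876667299625209913243014660097),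
  ([0, 0, 6, 10, 28, 44, 50],
    644629161420780307385516508326399057277625274789454377533505927400981462564711234586504942648808766670153916632124168501107898958802013387523114863476040929297065036540876759319268585630712035833348748171719011482333921581621989993593010547716359768716809933924838181468612830018359977323857635938399403398603877583739501037869418109390354073055591128638401621734440970639491546352216196398640953191105723196009749610676127934285256103259249553494675744104502399215938891065491573653563722574280037215614938836919745097823728120210311068419165262002028835459835334682735470208729545141052259551674489847381056959697973820262032982507128087621902520300763281375069452032256827794145291610750977),
  ([0, 2, 4, 14, 24, 40, 54],
    654196847347204847785112377379194468354099588798383225857746172578687322121701368927792508132789968578842083154563235244969809033572318839728036886835046137252346454967044564906072128983464516822549475278701700817057310086653089637613706987204795041411548992551372239863548602023045632897127471388987306738048338326496061028150213870577438580170424622267012992225511312726865071101677730798046653871291199517290311785012849197634436674694013531437052875790011213253037505783271486474535907734068340193255921308333068999362797809884073555255261289207650495352204048794025004648898855422060860031772172295001643139830798195761293004402670324559017312936806882031390441569093068314844323250044929),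
  ([0, 6, 10, 20, 24, 44, 50],
    782776706404525372856722139185664953567928911076366755713751792419669678551037852366727249835527761046059284023075770639002703860333956759149884057227736355660710754398421831406481839322034278812763362012843987002404489902536850781239573846814755444227891481267991522101696900595275278572064856062676077536784922391816758485803800992782374987859879020149006800021849591599235037353329548678870032764197812652712426481003849667452533808625031062568221647468665566804164056491968359802642287440458614169718121259007105474766929872889611645777077078447822371079886157618940725385120034656426091431330694414634187464340108607204941150624378866263915043055302964237920491545474079418969211536277505),
  ([0, 2, 12, 20, 26, 38, 56],
    522722353793550093354462887946097667004385173439721807925430157895446822570909642940861660537404428901503166113141706839998532357261579961669444590920454023419242816254616098528871090527518052822325840577190436201555209645346655017380596374246713445668023207309541820263787240396065477973867058118200842049402751049777262931783730108676440717613842973509293363345225388361419074547397513351679756781608117528306112114657512654966180486834309125210869934513858185220250769057987692071988794105773463936181739602392296846174706123330014208694536329976797847655714345251323830341958024715220018209168927332242764808273718902568434518669295278560673759409394391031148179782650081492027573055389697),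
  ([0, 6, 10, 18, 28, 36, 58],
    650078092936717180792766756451291610334574775855325583298625237312728413603992455607910174597607977477785823162091532080970057228080173915696930129671663487680574688830157190212621078493089897327170679038301143294468874263146916520051928877306868741781990161244879478708511861709962021201184663436999375253055211058969156362697726543686545841574804051452480952029318431390904410348447114868219116677871388274797678492854335652631696337958853769982872402151973829596602998818294678460632349238097368826206116345171051409897293957932318691929992569746480138919677883832181242802149039254051605032641555122842343234080158162261056907002142813669323667567621947078148559925174090868011336945500161),
  ([0, 6, 24, 30, 42, 44, 50],
    648279467911356918353067797895021920530977364372009589078551907759567592922177897803163900789637911557826084402978392673068623713248023446042971082535541184126404191039566449373148675459346735156128053964638331753981097510699726505238756477464169734580153432531643732190875784674654227583847713538920562674267698334575487168947413802328086077015558740690905963551288818712776132867458173393723546979768217264479710792204288532246125912160947895136225583208778389839018808080021771556413943798130151070096510499498098430402276547401926804773762446005577339969195670818313712886599671651462521942590509965575580326615242641065056968338368105413052965581315460132852601667814622278951958534291457)]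

/-- All certificates: number of rows and mask. -/
def certKM : List (Nat × Nat) := (7, balMask) :: certTab.map (fun d => (d.1, d.2.1))

theorem certTab_ok :
    certTab.all (fun d => checkCert d.1 d.2.1 d.2.2.1 d.2.2.2.1 d.2.2.2.2.1 d.2.2.2.2.2) = true := by
  decide +kernel

theorem balMask_ok : checkBal balMask = true := by decide +kernel

theorem certKM_sound : ∀ p ∈ certKM, CertSound p.1 p.2 := by
  intro p hp
  rcases List.mem_cons.1 hp with rfl | hp
  · exact checkBal_sound balMask_ok
  · obtain ⟨d, hd, rfl⟩ := List.mem_map.1 hp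
    exact checkCert_sound (List.all_eq_true.1 certTab_ok d hd)

/-- Base-8 digits. -/
def digits8 (n : Nat) : List Nat :=
  [n % 8, n / 8 % 8, n / 64 % 8, n / 512 % 8, n / 4096 % 8, n / 32768 % 8, n / 262144 % 8]

/-- Evaluate a natural number before passing it on. -/
def force {α : Type} (n : Nat) (f : Nat → α) : α :=
  match n with
  | 0 => f 0
  | m + 1 => f (m + 1)

theorem force_eq {α : Type} (n : Nat) (f : Nat → α) : force n f = f n := by
  cases n <;> rfl

/-- Evaluate all members of a mapped list before passing it on. -/
def fmap (f : Nat → Nat) : List Nat → (List Nat → Bool) → Bool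
  | [], q => q []
  | c :: l, q => force (f c) fun d => fmap f l fun l' => q (d :: l')

theorem fmap_eq (f : Nat → Nat) (l : List Nat) (q : List Nat → Bool) :
    fmap f l q = q (l.map f) := by
  induction l generalizing q with
  | nil => rfl
  | cons c l ih => simp only [fmap, force_eq, ih, List.map_cons]

/-- Evaluation-friendly form of `trc`. -/
def trf (k : Nat) (g : List Nat) (r c : Nat) : Nat :=
  force (permBits g c ^^^ r) (normBits k)

theorem trf_eq (k : Nat) (g : List Nat) (r : Nat) : trf k g r = trc k g r := by
  funext c
  exact force_eq _ _

/-- Check against a certificate. -/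
def certOK (k : Nat) (L : List Nat) (g : List Nat) (r : Nat) (p : Nat × Nat) : Bool :=
  Nat.ble p.1 7 && ((g.take p.1).all (fun i => Nat.blt i k) &&
    L.all (fun c => p.2.testBit (trf p.1 (g.take p.1) r c)))

/-- Check against a representative of the next level. -/
def nextOK (k : Nat) (L : List Nat) (g : List Nat) (r : Nat) (T : List Nat × Nat) : Bool :=
  (g.take k).all (fun i => Nat.blt i k) &&
    fmap (trf k (g.take k) r) L fun l => l.isPerm T.1

/-- Check one node of the case tree. -/
def nodeOK (k : Nat) (next : List (List Nat × Nat)) (L g : List Nat) (r n : Nat) : Bool :=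
  permOK g &&
    bif Nat.blt n 32 then
      match certKM[n]? with
      | some p => certOK k L g r p
      | none => false
    else
      match next[n - 32]? with
      | some T => nextOK k L g r T
      | none => false

/-- Check all nodes below a level. -/
def levOK (k : Nat) (cur next : List (List Nat × Nat)) : Bool :=
  cur.all fun p => Nat.beq p.1.length 7 &&
    allB 64 fun y => force ((p.2 >>> (36 * y)) % 68719476736) fun n =>
      fmap id (extY k p.1 y) fun L => fmap id (digits8 (n / 8192)) fun g =>
        force (n / 64 % 128) fun r => force (n % 64) fun i => nodeOK (k + 1) next L g r i

theorem levA_ok : levOK 1 levA levB = true := by decide +kernel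
theorem levB_ok : levOK 2 levB levC = true := by decide +kernel
theorem levC_ok : levOK 3 levC levD = true := by decide +kernel
theorem levD_ok : levOK 4 levD levE = true := by decide +kernel
theorem levE_ok : levOK 5 levE levF = true := by decide +kernel
theorem levF_ok : levOK 6 levF [] = true := by decide +kernel

theorem nodeOK_sound {k : ℕ} (hk : k ≤ 7) {next : List (List Nat × Nat)}
    (hnext : ∀ T ∈ next, ∀ M, Emb M k T.1 → SB (fun i j => sg (M i j)))
    {L g : List Nat} {r n : Nat} (h : nodeOK k next L g r n = true) (M : Fin 7 → Fin 7 → Bool)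
    (hE : Emb M k L) : SB (fun i j => sg (M i j)) := by
  unfold nodeOK at h
  rw [Bool.and_eq_true] at h
  obtain ⟨hg, h⟩ := h
  cases hb : Nat.blt n 32
  · rw [hb, cond_false] at h
    split at h
    · rename_i T hT
      unfold nextOK at h
      rw [Bool.and_eq_true, fmap_eq, trf_eq] at h
      exact hnext T (List.mem_of_getElem? hT) M
        (emb_perm (List.isPerm_iff.1 h.2) (emb_tr hk _ hg h.1 hE))
    · exact Bool.noConfusion h
  · rw [hb, cond_true] at h
    split at h
    · rename_i p hp
      unfold certOK at h
      rw [Bool.and_eq_true, Bool.and_eq_true, trf_eq] at h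
      obtain ⟨h1, h2, h3⟩ := h
      refine certKM_sound p (List.mem_of_getElem? hp) M _
        (emb_tr (Nat.le_of_ble_eq_true h1) r hg h2 hE) ?_
      intro c hc
      obtain ⟨d, hd, rfl⟩ := List.mem_map.1 hc
      exact List.all_eq_true.1 h3 d hd
    · exact Bool.noConfusion h

theorem levOK_sound {k : ℕ} (hk : k < 7) {cur next : List (List Nat × Nat)}
    (h : levOK k cur next = true)
    (hnext : ∀ T ∈ next, ∀ M, Emb M (k + 1) T.1 → SB (fun i j => sg (M i j))) :
    ∀ T ∈ cur, ∀ M, Emb M k T.1 → SB (fun i j => sg (M i j)) := by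
  intro T hT M hE
  have h1 := List.all_eq_true.1 h T hT
  rw [Bool.and_eq_true] at h1
  obtain ⟨hl, h2⟩ := h1
  obtain ⟨y, hy, hE'⟩ := emb_ext hk (Nat.eq_of_beq_eq_true hl) hE
  have h3 := allB_spec h2 y hy
  simp only [force_eq, fmap_eq, List.map_id] at h3
  exact nodeOK_sound hk hnext h3 M hE'

theorem levA_mem : ∃ T ∈ levA, T.1 = [0, 0, 0, 0, 0, 0, 0] :=
  ⟨_, List.mem_cons_self, rfl⟩

theorem all_signs (M : Fin 7 → Fin 7 → Bool) : SB (fun i j => sg (M i j)) := by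
  obtain ⟨T, hT, hT0⟩ := levA_mem
  refine levOK_sound (by norm_num) levA_ok (levOK_sound (by norm_num) levB_ok
    (levOK_sound (by norm_num) levC_ok (levOK_sound (by norm_num) levD_ok
    (levOK_sound (by norm_num) levE_ok (levOK_sound (by norm_num) levF_ok ?_))))) T hT M ?_
  · intro T hT
    simp at hT
  · rw [hT0]
    exact emb_init M

end data

section final

theorem schur_le (S : Matrix (Fin 7) (Fin 7) ℝ) (hS : ∀ i j, |S i j| ≤ 1) :
    ∀ C : Matrix (Fin 7) (Fin 7) ℂ, C.copNorm ≤ 1 →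
      (Matrix.hadamard (S.map Complex.ofReal) C).copNorm ≤ cst :=
  SB_of_signs all_signs S hS

theorem schurNorm_le (S : Matrix (Fin 7) (Fin 7) ℝ) (hS : ∀ i j, |S i j| ≤ 1) :
    (S.map Complex.ofReal).schurNorm ≤ cst := by
  refine csSup_le ⟨_, 0, ?_, rfl⟩ ?_
  · refine copNorm_le_of zero_le_one (fun v => ?_)
    simp
    positivity
  · rintro x ⟨C, hC, rfl⟩
    exact schur_le S hS C hC

theorem le_schurNorm (S : Matrix (Fin 7) (Fin 7) ℝ) (hS : ∀ i j, |S i j| ≤ 1)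
    (C : Matrix (Fin 7) (Fin 7) ℂ) (hC : C.copNorm ≤ 1) :
    (Matrix.hadamard (S.map Complex.ofReal) C).copNorm ≤ (S.map Complex.ofReal).schurNorm := by
  refine le_csSup ⟨cst, ?_⟩ ⟨C, hC, rfl⟩
  rintro x ⟨C, hC, rfl⟩
  exact schur_le S hS C hC

/-- The Paley sign vector. -/
def pv : Fin 7 → ℝ := ![1, -1, -1, 1, -1, 1, 1]

theorem pv_signs (k : Fin 7) : pv k = 1 ∨ pv k = -1 := by
  fin_cases k <;> simp [pv]

theorem pv_abs (i j : Fin 7) : |Matrix.circulant pv i j| ≤ 1 := by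
  rw [Matrix.circulant_apply]
  rcases pv_signs (i - j) with h | h <;> simp [h]

theorem pv_iso {a b : ℝ} (h1 : a ^ 2 = 1 / 8) (h2 : 7 * b ^ 2 + 2 * a * b = 1 / 8)
    (x : Fin 7 → ℝ) :
    ∑ i, (∑ j, (a * pv (i - j) + b) * x j) ^ 2 = ∑ j, x j ^ 2 := by
  have e : ∀ i, ∑ j, (a * pv (i - j) + b) * x j = a * (∑ j, pv (i - j) * x j) + b * ∑ j, x j := by
    intro i
    rw [Finset.mul_sum, Finset.mul_sum, ← Finset.sum_add_distrib]
    exact Finset.sum_congr rfl (fun j _ => by ring)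
  have e1 : ∑ i, (∑ j, pv (i - j) * x j) ^ 2 = 8 * ∑ j, x j ^ 2 - (∑ j, x j) ^ 2 := by
    simp [Fin.sum_univ_seven, pv, Fin.sub_def]
    ring
  have e2 : ∑ i, (∑ j, pv (i - j) * x j) = ∑ j, x j := by
    simp [Fin.sum_univ_seven, pv, Fin.sub_def]
    ring
  simp only [e]
  have e3 : ∀ i, (a * (∑ j, pv (i - j) * x j) + b * ∑ j, x j) ^ 2
      = a ^ 2 * (∑ j, pv (i - j) * x j) ^ 2
        + 2 * a * b * (∑ j, x j) * (∑ j, pv (i - j) * x j) + b ^ 2 * (∑ j, x j) ^ 2 := by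
    intro i; ring
  simp only [e3]
  rw [Finset.sum_add_distrib, Finset.sum_add_distrib, ← Finset.mul_sum, ← Finset.mul_sum, e1, e2]
  simp only [Finset.sum_const, Finset.card_univ, Fintype.card_fin, nsmul_eq_mul]
  push_cast
  linear_combination (8 * ∑ j, x j ^ 2 - (∑ j, x j) ^ 2) * h1 + (∑ j, x j) ^ 2 * h2

theorem pv_row (a b : ℝ) (i : Fin 7) :
    ∑ j, pv (i - j) * (a * pv (i - j) + b) = 7 * a + b := by
  fin_cases i <;> simp [Fin.sum_univ_seven, pv, Fin.sub_def] <;> ring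

theorem paley_ge : cst ≤ ((Matrix.circulant pv).map Complex.ofReal).schurNorm := by
  have hs2 : Real.sqrt 2 ^ 2 = 2 := Real.sq_sqrt (by norm_num)
  obtain ⟨a, ha⟩ : ∃ a : ℝ, a = Real.sqrt 2 / 4 := ⟨_, rfl⟩
  obtain ⟨b, hb⟩ : ∃ b : ℝ, b = (1 - Real.sqrt 2 / 4) / 7 := ⟨_, rfl⟩
  have h1 : a ^ 2 = 1 / 8 := by rw [ha]; linear_combination hs2 / 16
  have h2 : 7 * b ^ 2 + 2 * a * b = 1 / 8 := by rw [ha, hb]; linear_combination (-1 / 112) * hs2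
  have h3 : 7 * a + b = cst := by rw [ha, hb, cst]; ring
  obtain ⟨U, hU⟩ : ∃ U : Matrix (Fin 7) (Fin 7) ℂ,
      ∀ i j, U i j = ((a * pv (i - j) + b : ℝ) : ℂ) := ⟨fun i j => _, fun i j => rfl⟩
  have hC : U.copNorm ≤ 1 := by
    refine copNorm_le_of zero_le_one (fun v => ?_)
    have e : ∀ i, ‖∑ j, U i j * v j‖ ^ 2 = (∑ j, (a * pv (i - j) + b) * (v j).re) ^ 2
        + (∑ j, (a * pv (i - j) + b) * (v j).im) ^ 2 := by
      intro i
      rw [Complex.sq_norm, Complex.normSq_apply, Complex.re_sum, Complex.im_sum, ← sq, ← sq]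
      simp only [hU, Complex.re_ofReal_mul, Complex.im_ofReal_mul]
    have e' : ∀ j, ‖v j‖ ^ 2 = (v j).re ^ 2 + (v j).im ^ 2 := by
      intro j
      rw [Complex.sq_norm, Complex.normSq_apply, sq, sq]
    simp only [e, e', Finset.sum_add_distrib]
    rw [pv_iso h1 h2 (fun j => (v j).re), pv_iso h1 h2 (fun j => (v j).im)]
    simp
  refine le_trans ?_ (le_schurNorm _ pv_abs U hC)
  have h4 := of_copNorm_le
    (le_refl (Matrix.hadamard ((Matrix.circulant pv).map Complex.ofReal) U).copNorm) (fun _ => 1)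
  have e : ∀ i, ∑ j, (Matrix.hadamard ((Matrix.circulant pv).map Complex.ofReal) U) i j * 1
      = ((cst : ℝ) : ℂ) := by
    intro i
    rw [← h3, ← pv_row a b i, Complex.ofReal_sum]
    refine Finset.sum_congr rfl (fun j _ => ?_)
    simp [Matrix.hadamard_apply, Matrix.circulant_apply, hU]
  simp only [e] at h4
  have h0 : 0 ≤ (Matrix.hadamard ((Matrix.circulant pv).map Complex.ofReal) U).copNorm := by
    unfold Matrix.copNorm
    exact norm_nonneg _
  simp at h4
  exact (pow_le_pow_iff_left₀ cst_pos h0 two_ne_zero).1 (by nlinarith [h4])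

end final

/-- `r 7 = (1 + 12√2) / 7`, attained by a circulant `±1` matrix. -/
theorem rSchur_seven :
    rSchur 7 = (1 + 12 * Real.sqrt 2) / 7 ∧
      ∃ v : Fin 7 → ℝ, (∀ k, v k = 1 ∨ v k = -1) ∧
        Matrix.schurNorm ((Matrix.circulant v).map Complex.ofReal) =
          (1 + 12 * Real.sqrt 2) / 7 := by
  have hP : ((Matrix.circulant pv).map Complex.ofReal).schurNorm = (1 + 12 * Real.sqrt 2) / 7 :=
    le_antisymm (schurNorm_le _ pv_abs) paley_ge
  refine ⟨le_antisymm ?_ ?_, pv, pv_signs, hP⟩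
  · refine csSup_le ⟨_, Matrix.circulant pv, pv_abs, rfl⟩ ?_
    rintro x ⟨S, hS, rfl⟩
    exact schurNorm_le S hS
  · refine le_csSup ⟨cst, ?_⟩ ⟨Matrix.circulant pv, pv_abs, hP.symm⟩
    rintro x ⟨S, hS, rfl⟩
    exact schurNorm_le S hS
end

section
/- Let A be an n×n complex matrix. Then ‖A‖_S equals the infimum of all real numbers c ≥ 0 such that there exist Hermitian n×n complex matrices Y and Z with y_{jj} = z_{jj} = c for all 1 ≤ j ≤ n and such that the 2n×2n block matrix [[Y, A], [A*, Z]] is positive semidefinite; moreover this infimum is attained. -/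
open scoped ComplexOrder

section Helpers

open scoped MatrixOrder

/-- Operator norm bound through the bilinear form. -/
lemma copNorm_le_iff_form {n : ℕ} (M : Matrix (Fin n) (Fin n) ℂ) {c : ℝ} (hc : 0 ≤ c) :
    Matrix.copNorm M ≤ c ↔ ∀ x y : Fin n → ℂ,
      (∑ i, ∑ j, M i j * (x i * y j)).re ≤ c * (∑ i, ‖x i‖ ^ 2 + ∑ j, ‖y j‖ ^ 2) / 2 := by
  have key : ∀ x y : EuclideanSpace ℂ (Fin n),
      inner ℂ (LinearMap.toContinuousLinearMap (Matrix.toEuclideanLin M) x) y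
        = (starRingEnd ℂ) (∑ i, ∑ j, M i j * ((starRingEnd ℂ) (y i) * x j)) := by
    intro x y
    simp only [PiLp.inner_apply, LinearMap.coe_toContinuousLinearMap', Matrix.toLpLin_apply,
      Matrix.mulVec, dotProduct, map_sum, RCLike.inner_apply, map_mul, Finset.mul_sum,
      Complex.conj_conj]
    refine Finset.sum_congr rfl fun i _ => Finset.sum_congr rfl fun j _ => ?_
    ring
  constructor
  · intro h x y
    set X : EuclideanSpace ℂ (Fin n) := WithLp.toLp 2 y
    set Y : EuclideanSpace ℂ (Fin n) := WithLp.toLp 2 (fun i => (starRingEnd ℂ) (x i))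
    have h1 := key X Y
    have h2 : (inner ℂ (LinearMap.toContinuousLinearMap (Matrix.toEuclideanLin M) X) Y).re
        ≤ c * (‖X‖ * ‖Y‖) := by
      refine (Complex.re_le_norm _).trans ((norm_inner_le_norm _ _).trans ?_)
      have := ContinuousLinearMap.le_of_opNorm_le _ h X
      calc _ ≤ (c * ‖X‖) * ‖Y‖ := by gcongr
        _ = _ := by ring
    rw [h1, Complex.conj_re] at h2
    have hX : ‖X‖ ^ 2 = ∑ j, ‖y j‖ ^ 2 := by
      rw [EuclideanSpace.norm_sq_eq]
    have hY : ‖Y‖ ^ 2 = ∑ j, ‖x j‖ ^ 2 := by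
      rw [EuclideanSpace.norm_sq_eq]; simp [Y]
    rw [← hX, ← hY]
    simp only [X, Y, Complex.conj_conj] at h2 ⊢
    refine h2.trans ?_
    have := mul_le_mul_of_nonneg_left (two_mul_le_add_sq ‖X‖ ‖Y‖) hc
    simp only [X, Y] at this
    linarith
  · intro h
    refine ContinuousLinearMap.opNorm_le_of_re_inner_le (𝕜 := ℂ) hc fun x y hx hy => ?_
    rw [key]
    have := h (fun i => (starRingEnd ℂ) (y i)) (fun j => x j)
    have hX := EuclideanSpace.norm_sq_eq x
    have hY := EuclideanSpace.norm_sq_eq y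
    simp only [RCLike.norm_conj] at this
    rw [← hX, ← hY, hx, hy] at this
    simp only [RCLike.re_to_complex, Complex.conj_re]
    linarith

lemma copNorm_nonneg {n : ℕ} (M : Matrix (Fin n) (Fin n) ℂ) : 0 ≤ Matrix.copNorm M :=
  norm_nonneg _

lemma copNorm_zero_mat {n : ℕ} : Matrix.copNorm (0 : Matrix (Fin n) (Fin n) ℂ) = 0 := by
  simp [Matrix.copNorm]

lemma norm_entry_le_copNorm {n : ℕ} (M : Matrix (Fin n) (Fin n) ℂ) (i j : Fin n) :
    ‖M i j‖ ≤ Matrix.copNorm M := by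
  have h := ContinuousLinearMap.le_opNorm
    (LinearMap.toContinuousLinearMap (Matrix.toEuclideanLin M)) (EuclideanSpace.single j 1)
  have h2 := PiLp.norm_apply_le
    ((LinearMap.toContinuousLinearMap (Matrix.toEuclideanLin M)) (EuclideanSpace.single j 1)) i
  simp [Matrix.toLpLin_apply] at h h2
  simpa [Matrix.copNorm] using h2.trans h

lemma schur_bdd {n : ℕ} (A : Matrix (Fin n) (Fin n) ℂ) :
    BddAbove {x | ∃ C : Matrix (Fin n) (Fin n) ℂ, Matrix.copNorm C ≤ 1 ∧
      x = Matrix.copNorm (Matrix.hadamard A C)} := by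
  refine ⟨∑ i, ∑ j, ‖A i j‖, ?_⟩
  rintro _ ⟨C, hC, rfl⟩
  rw [copNorm_le_iff_form _ (by positivity)]
  intro x y
  refine (Complex.re_le_norm _).trans ((norm_sum_le _ _).trans ?_)
  rw [mul_div_assoc, Finset.sum_mul]
  refine Finset.sum_le_sum fun i _ => (norm_sum_le _ _).trans ?_
  rw [Finset.sum_mul]
  refine Finset.sum_le_sum fun j _ => ?_
  have h1 : ‖C i j‖ ≤ 1 := (norm_entry_le_copNorm C i j).trans hC
  have h2 : ‖x i‖ ^ 2 ≤ ∑ i, ‖x i‖ ^ 2 :=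
    Finset.single_le_sum (f := fun i => ‖x i‖ ^ 2) (fun _ _ => by positivity) (Finset.mem_univ i)
  have h3 : ‖y j‖ ^ 2 ≤ ∑ i, ‖y i‖ ^ 2 :=
    Finset.single_le_sum (f := fun i => ‖y i‖ ^ 2) (fun _ _ => by positivity) (Finset.mem_univ j)
  have h4 := two_mul_le_add_sq ‖x i‖ ‖y j‖
  simp only [Matrix.hadamard_apply, norm_mul]
  calc ‖A i j‖ * ‖C i j‖ * (‖x i‖ * ‖y j‖) ≤ ‖A i j‖ * 1 * (‖x i‖ * ‖y j‖) := by gcongr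
    _ ≤ ‖A i j‖ * ((∑ i, ‖x i‖ ^ 2 + ∑ j, ‖y j‖ ^ 2) / 2) := by
      rw [mul_one]; gcongr; linarith

lemma le_schurNorm_s17 {n : ℕ} (A C : Matrix (Fin n) (Fin n) ℂ) (hC : Matrix.copNorm C ≤ 1) :
    Matrix.copNorm (Matrix.hadamard A C) ≤ Matrix.schurNorm A :=
  le_csSup (schur_bdd A) ⟨C, hC, rfl⟩

lemma schurNorm_nonneg {n : ℕ} (A : Matrix (Fin n) (Fin n) ℂ) : 0 ≤ Matrix.schurNorm A :=
  (copNorm_nonneg _).trans (le_schurNorm_s17 A 0 (by rw [copNorm_zero_mat]; norm_num))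

lemma gram_diag {ι : Type*} [Fintype ι] (V : Matrix ι ι ℂ) (i : ι) :
    ((star V * V) i i).re = ∑ k, ‖V k i‖ ^ 2 := by
  simp only [Matrix.mul_apply, Matrix.star_apply, Complex.re_sum]
  refine Finset.sum_congr rfl fun k _ => ?_
  have : star (V k i) * V k i = ((‖V k i‖ ^ 2 : ℝ) : ℂ) := by
    have := Complex.conj_mul' (V k i)
    simpa using this
  rw [this, Complex.ofReal_re]

/-- The easy direction. -/
lemma schurNorm_le_of_feasible {n : ℕ} (A : Matrix (Fin n) (Fin n) ℂ) {c : ℝ} (hc : 0 ≤ c)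
    (P : Matrix (Fin n ⊕ Fin n) (Fin n ⊕ Fin n) ℂ) (hP : P.PosSemidef)
    (hd : ∀ i, (P i i).re ≤ c) (hA : ∀ i j, P (.inl i) (.inr j) = A i j) :
    Matrix.schurNorm A ≤ c := by
  refine csSup_le ⟨_, 0, by rw [copNorm_zero_mat]; norm_num, rfl⟩ ?_
  rintro _ ⟨C, hC, rfl⟩
  rw [copNorm_le_iff_form _ zero_le_one] at hC
  rw [copNorm_le_iff_form _ hc]
  intro x y
  obtain ⟨V, rfl⟩ := CStarAlgebra.nonneg_iff_eq_star_mul_self.mp hP.nonneg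
  simp only [gram_diag] at hd
  have e : ∑ i, ∑ j, (Matrix.hadamard A C) i j * (x i * y j)
      = ∑ k, ∑ i, ∑ j, C i j * ((star (V k (.inl i)) * x i) * (V k (.inr j) * y j)) := by
    rw [Finset.sum_comm (s := (Finset.univ : Finset (Fin n ⊕ Fin n)))]
    refine Finset.sum_congr rfl fun i _ => ?_
    rw [Finset.sum_comm (s := (Finset.univ : Finset (Fin n ⊕ Fin n)))]
    refine Finset.sum_congr rfl fun j _ => ?_
    rw [Matrix.hadamard_apply, ← hA, Matrix.mul_apply, Finset.sum_mul, Finset.sum_mul]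
    refine Finset.sum_congr rfl fun k _ => ?_
    rw [Matrix.star_apply]
    ring
  rw [e, Complex.re_sum]
  refine (Finset.sum_le_sum fun k _ => hC (fun i => star (V k (.inl i)) * x i)
    (fun j => V k (.inr j) * y j)).trans ?_
  simp only [one_mul, norm_mul, norm_star, mul_pow]
  rw [← Finset.sum_div, Finset.sum_add_distrib]
  gcongr
  rw [mul_add]
  rw [Finset.sum_comm, Finset.mul_sum]
  rw [Finset.sum_comm (s := (Finset.univ : Finset (Fin n ⊕ Fin n))), Finset.mul_sum]
  gcongr with i _ j _
  · rw [← Finset.sum_mul]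
    gcongr
    exact hd _
  · rw [← Finset.sum_mul]
    gcongr
    exact hd _

/-- Feasible cone. -/
def feasCone (n : ℕ) : Set (((Fin n ⊕ Fin n) → ℝ) × (Fin n → Fin n → ℂ)) :=
  {p | ∃ P : Matrix (Fin n ⊕ Fin n) (Fin n ⊕ Fin n) ℂ, P.PosSemidef ∧
    (∀ i, (P i i).re ≤ p.1 i) ∧ ∀ i j, P (.inl i) (.inr j) = p.2 i j}

lemma feasCone_add {n : ℕ} {p q} (hp : p ∈ feasCone n) (hq : q ∈ feasCone n) :
    p + q ∈ feasCone n := by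
  obtain ⟨P, h1, h2, h3⟩ := hp
  obtain ⟨Q, k1, k2, k3⟩ := hq
  refine ⟨P + Q, h1.add k1, fun i => ?_, fun i j => ?_⟩
  · simpa using add_le_add (h2 i) (k2 i)
  · simp [h3, k3]

lemma feasCone_smul {n : ℕ} {p} (hp : p ∈ feasCone n) {t : ℝ} (ht : 0 ≤ t) :
    t • p ∈ feasCone n := by
  obtain ⟨P, h1, h2, h3⟩ := hp
  refine ⟨(t : ℂ) • P, h1.smul (by simpa using ht), fun i => ?_, fun i j => ?_⟩
  · simpa using mul_le_mul_of_nonneg_left (h2 i) ht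
  · simp [h3]

lemma feasCone_convex (n : ℕ) : Convex ℝ (feasCone n) := by
  intro p hp q hq a b ha hb _
  exact feasCone_add (feasCone_smul hp ha) (feasCone_smul hq hb)

lemma feasCone_closed (n : ℕ) : IsClosed (feasCone n) := by
  rw [← isSeqClosed_iff_isClosed]
  intro u p hu hlim
  choose P hP hd hB using hu
  have hV : ∀ k, ∃ V : (Fin n ⊕ Fin n) → (Fin n ⊕ Fin n) → ℂ,
      P k = star (Matrix.of V) * Matrix.of V := fun k => by
    obtain ⟨V, h⟩ := CStarAlgebra.nonneg_iff_eq_star_mul_self.mp (hP k).nonneg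
    exact ⟨V, h⟩
  choose V hV using hV
  obtain ⟨R, hR⟩ := (Metric.isBounded_range_of_tendsto u hlim).exists_norm_le
  have hR' : ∀ k, ‖u k‖ ≤ R := fun k => hR _ ⟨k, rfl⟩
  have hR0 : 0 ≤ R := (norm_nonneg _).trans (hR' 0)
  have hbd : ∀ k, V k ∈ Metric.closedBall (0 : (Fin n ⊕ Fin n) → (Fin n ⊕ Fin n) → ℂ) (R + 1) := by
    intro k
    rw [mem_closedBall_zero_iff, pi_norm_le_iff_of_nonneg (by linarith)]
    intro a
    rw [pi_norm_le_iff_of_nonneg (by linarith)]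
    intro b
    have h1 := hd k b
    rw [hV k, gram_diag] at h1
    have h2 : ‖V k a b‖ ^ 2 ≤ ∑ l, ‖V k l b‖ ^ 2 :=
      Finset.single_le_sum (f := fun l => ‖V k l b‖ ^ 2) (fun _ _ => by positivity)
        (Finset.mem_univ a)
    have h3 : (u k).1 b ≤ R := (le_abs_self _).trans
      ((norm_le_pi_norm (u k).1 b).trans ((norm_fst_le _).trans (hR' k)))
    have h4 : ‖V k a b‖ ^ 2 ≤ R := h2.trans (h1.trans h3)
    nlinarith [norm_nonneg (V k a b)]
  obtain ⟨W, -, φ, hφ, hW⟩ := (isCompact_closedBall _ _).tendsto_subseq hbd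
  have hu' := hlim.comp hφ.tendsto_atTop
  have hent : ∀ a b, Filter.Tendsto (fun k => P (φ k) a b) Filter.atTop
      (nhds ((star (Matrix.of W) * Matrix.of W) a b)) := by
    intro a b
    simp only [hV, Matrix.mul_apply, Matrix.star_apply, Matrix.of_apply]
    refine tendsto_finsetSum _ fun c _ => ?_
    have hc : ∀ b, Filter.Tendsto (fun k => V (φ k) c b) Filter.atTop (nhds (W c b)) := fun b =>
      ((tendsto_pi_nhds.1 ((tendsto_pi_nhds.1 hW) c)) b)
    exact (hc a).star.mul (hc b)
  refine ⟨star (Matrix.of W) * Matrix.of W, Matrix.posSemidef_conjTranspose_mul_self _,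
    fun i => ?_, fun i j => ?_⟩
  · refine le_of_tendsto_of_tendsto' ((Complex.continuous_re.tendsto _).comp (hent i i))
      (tendsto_pi_nhds.1 (hu'.fst_nhds) i) fun k => hd (φ k) i
  · refine tendsto_nhds_unique (hent _ _) ?_
    simp only [hB]
    exact (tendsto_pi_nhds.1 (tendsto_pi_nhds.1 (hu'.snd_nhds) i) j)

/-- Shape of real functionals. -/
lemma functional_repr {n : ℕ} (f : (((Fin n ⊕ Fin n) → ℝ) × (Fin n → Fin n → ℂ)) →L[ℝ] ℝ) :
    ∃ (w w' : Fin n → ℝ) (g : Fin n → Fin n → ℂ), ∀ d B,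
      f (d, B) = (∑ i, ∑ j, B i j * g i j).re
        - (∑ i, w i * d (.inl i) + ∑ j, w' j * d (.inr j)) := by
  refine ⟨fun i => -f (Pi.single (.inl i) 1, 0), fun i => -f (Pi.single (.inr i) 1, 0),
    fun i j => ⟨f (0, Pi.single i (Pi.single j 1)), -f (0, Pi.single i (Pi.single j Complex.I))⟩,
    fun d B => ?_⟩
  have hdec : (d, B) = (∑ i, d (.inl i) • ((Pi.single (.inl i) 1, 0) :
        ((Fin n ⊕ Fin n) → ℝ) × (Fin n → Fin n → ℂ)))
      + (∑ i, d (.inr i) • ((Pi.single (.inr i) 1, 0) :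
        ((Fin n ⊕ Fin n) → ℝ) × (Fin n → Fin n → ℂ)))
      + ∑ i, ∑ j, ((B i j).re • ((0, Pi.single i (Pi.single j 1)) :
          ((Fin n ⊕ Fin n) → ℝ) × (Fin n → Fin n → ℂ))
        + (B i j).im • ((0, Pi.single i (Pi.single j Complex.I)) :
          ((Fin n ⊕ Fin n) → ℝ) × (Fin n → Fin n → ℂ))) := by
    refine Prod.ext ?_ ?_
    · funext a
      rcases a with a | a <;>
        simp [Prod.fst_sum, Finset.sum_apply, Pi.single_apply]
    · funext a b
      simp [Prod.snd_sum, Finset.sum_apply, Pi.single_apply, ite_apply,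
        Finset.sum_add_distrib]
  rw [hdec]
  simp only [map_add, map_sum, map_smul, smul_eq_mul, Complex.re_sum, Complex.mul_re,
    neg_mul, Finset.sum_neg_distrib, mul_comm (d _), mul_neg, sub_neg_eq_add]
  ring

lemma dual_bound {n : ℕ} (A g : Matrix (Fin n) (Fin n) ℂ) (w w' : Fin n → ℝ)
    (hw : ∀ i, 0 < w i) (hw' : ∀ i, 0 < w' i)
    (h : ∀ x y : Fin n → ℂ, (∑ i, ∑ j, x i * y j * g i j).re
      ≤ ∑ i, w i * ‖x i‖ ^ 2 + ∑ j, w' j * ‖y j‖ ^ 2) :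
    (∑ i, ∑ j, A i j * g i j).re ≤ Matrix.schurNorm A * (∑ i, w i + ∑ j, w' j) := by
  set C : Matrix (Fin n) (Fin n) ℂ :=
    fun i j => g i j / (2 * ((√(w i) : ℝ) : ℂ) * ((√(w' j) : ℝ) : ℂ)) with hCdef
  have hs : ∀ i, ((√(w i) : ℝ) : ℂ) ≠ 0 := fun i => by
    simpa using (Real.sqrt_pos.2 (hw i)).ne'
  have hs' : ∀ i, ((√(w' i) : ℝ) : ℂ) ≠ 0 := fun i => by
    simpa using (Real.sqrt_pos.2 (hw' i)).ne'
  have hC : Matrix.copNorm C ≤ 1 := by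
    rw [copNorm_le_iff_form _ zero_le_one]
    intro x y
    have h1 := h (fun i => x i / ((√(w i) : ℝ) : ℂ)) (fun j => y j / ((√(w' j) : ℝ) : ℂ))
    have e : ∑ i, ∑ j, x i / ((√(w i) : ℝ) : ℂ) * (y j / ((√(w' j) : ℝ) : ℂ)) * g i j
        = ((2 : ℝ) : ℂ) * ∑ i, ∑ j, C i j * (x i * y j) := by
      simp only [Finset.mul_sum]
      refine Finset.sum_congr rfl fun i _ => Finset.sum_congr rfl fun j _ => ?_
      have := hs i
      have := hs' j
      simp only [hCdef]
      push_cast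
      field_simp
    rw [e, Complex.re_ofReal_mul] at h1
    have e1 : ∀ i, w i * ‖x i / ((√(w i) : ℝ) : ℂ)‖ ^ 2 = ‖x i‖ ^ 2 := fun i => by
      rw [norm_div, div_pow, Complex.norm_real, Real.norm_eq_abs, sq_abs, Real.sq_sqrt (hw i).le]
      have := (hw i).ne'
      field_simp
    have e2 : ∀ i, w' i * ‖y i / ((√(w' i) : ℝ) : ℂ)‖ ^ 2 = ‖y i‖ ^ 2 := fun i => by
      rw [norm_div, div_pow, Complex.norm_real, Real.norm_eq_abs, sq_abs, Real.sq_sqrt (hw' i).le]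
      have := (hw' i).ne'
      field_simp
    simp only [e1, e2] at h1
    linarith
  have h2 := (copNorm_le_iff_form _ (schurNorm_nonneg A)).1 (le_schurNorm_s17 A C hC)
    (fun i => ((√(w i) : ℝ) : ℂ)) (fun i => ((√(w' i) : ℝ) : ℂ))
  have e : ∑ i, ∑ j, A i j * g i j = ((2 : ℝ) : ℂ) * ∑ i, ∑ j, (Matrix.hadamard A C) i j *
      (((√(w i) : ℝ) : ℂ) * ((√(w' j) : ℝ) : ℂ)) := by
    simp only [Finset.mul_sum]
    refine Finset.sum_congr rfl fun i _ => Finset.sum_congr rfl fun j _ => ?_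
    have := hs i
    have := hs' j
    rw [Matrix.hadamard_apply]
    simp only [hCdef]
    push_cast
    field_simp
  have e1 : ∀ i, ‖((√(w i) : ℝ) : ℂ)‖ ^ 2 = w i := fun i => by
    rw [Complex.norm_real, Real.norm_eq_abs, sq_abs, Real.sq_sqrt (hw i).le]
  have e2 : ∀ i, ‖((√(w' i) : ℝ) : ℂ)‖ ^ 2 = w' i := fun i => by
    rw [Complex.norm_real, Real.norm_eq_abs, sq_abs, Real.sq_sqrt (hw' i).le]
  simp only [e1, e2] at h2
  rw [e, Complex.re_ofReal_mul]
  linarith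

/-- The hard direction. -/
lemma schurNorm_mem_cone {n : ℕ} (A : Matrix (Fin n) (Fin n) ℂ) :
    ((fun _ => Matrix.schurNorm A, fun i j => A i j) : ((Fin n ⊕ Fin n) → ℝ) × (Fin n → Fin n → ℂ))
      ∈ feasCone n := by
  by_contra hA
  obtain ⟨f, u, hf, hu⟩ :=
    geometric_hahn_banach_closed_point (feasCone_convex n) (feasCone_closed n) hA
  have h0 : (0 : ((Fin n ⊕ Fin n) → ℝ) × (Fin n → Fin n → ℂ)) ∈ feasCone n :=
    ⟨0, Matrix.PosSemidef.zero, by simp, by simp⟩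
  have hu0 : 0 < u := by simpa using hf 0 h0
  have hneg : ∀ p ∈ feasCone n, f p ≤ 0 := by
    intro p hp
    by_contra! hpos
    have := hf _ (feasCone_smul hp (t := u / f p) (by positivity))
    rw [map_smul, smul_eq_mul, div_mul_cancel₀ _ hpos.ne'] at this
    exact lt_irrefl _ this
  obtain ⟨w, w', g, hrep⟩ := functional_repr f
  have hw : ∀ i, 0 ≤ w i := by
    intro i
    have := hneg (Pi.single (.inl i) 1, 0) ⟨0, Matrix.PosSemidef.zero, by
      intro j; by_cases hj : j = .inl i <;> simp [Pi.single_apply, hj], by simp⟩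
    rw [hrep] at this
    simpa [Pi.single_apply] using this
  have hw' : ∀ i, 0 ≤ w' i := by
    intro i
    have := hneg (Pi.single (.inr i) 1, 0) ⟨0, Matrix.PosSemidef.zero, by
      intro j; by_cases hj : j = .inr i <;> simp [Pi.single_apply, hj], by simp⟩
    rw [hrep] at this
    simpa [Pi.single_apply] using this
  have hform : ∀ x y : Fin n → ℂ, (∑ i, ∑ j, x i * y j * g i j).re
      ≤ ∑ i, w i * ‖x i‖ ^ 2 + ∑ j, w' j * ‖y j‖ ^ 2 := by
    intro x y
    have := hneg (Sum.elim (fun i => ‖x i‖ ^ 2) (fun i => ‖y i‖ ^ 2), fun i j => x i * y j)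
      ⟨Matrix.vecMulVec (star (Sum.elim (star x) y)) (Sum.elim (star x) y),
        Matrix.posSemidef_vecMulVec_star_self _, by
          rintro (i | i)
          · simp [Matrix.vecMulVec_apply, ← Complex.normSq_eq_norm_sq, Complex.normSq_apply]
          · simp [Matrix.vecMulVec_apply, ← Complex.normSq_eq_norm_sq, Complex.normSq_apply], by
          intro i j
          simp [Matrix.vecMulVec_apply]⟩
    rw [hrep] at this
    simpa using this
  have hx : 0 < f (fun _ => Matrix.schurNorm A, fun i j => A i j) := hu0.trans hu
  rw [hrep] at hx
  have hs := schurNorm_nonneg A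
  set s := Matrix.schurNorm A with hsdef
  set r := (∑ i, ∑ j, A i j * g i j).re with hr
  have hall : ∀ ε : ℝ, 0 < ε → r ≤ s * (∑ i, w i + ∑ j, w' j) + ε * (s * (2 * n)) := by
    intro ε hε
    have := dual_bound A g (fun i => w i + ε) (fun i => w' i + ε)
      (fun i => by linarith [hw i]) (fun i => by linarith [hw' i]) (fun x y => by
        refine (hform x y).trans ?_
        gcongr <;> linarith)
    simp only [Finset.sum_add_distrib, Finset.sum_const, Finset.card_univ, Fintype.card_fin,
      nsmul_eq_mul] at this
    linarith
  simp only [← Finset.sum_mul] at hx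
  have hpos : 0 < r - s * (∑ i, w i + ∑ j, w' j) := by linarith
  have hk : 0 ≤ s * (2 * n) := by positivity
  have := hall ((r - s * (∑ i, w i + ∑ j, w' j)) / (s * (2 * n) + 1)) (by positivity)
  have h3 : (r - s * (∑ i, w i + ∑ j, w' j)) / (s * (2 * n) + 1) * (s * (2 * n))
      < r - s * (∑ i, w i + ∑ j, w' j) := by
    rw [div_mul_eq_mul_div, div_lt_iff₀ (by positivity)]
    nlinarith
  linarith

end Helpers

/-- The Schur norm of `A` is the least `c ≥ 0` for which there are Hermitian matrices `Y`, `Z`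
with all diagonal entries equal to `c` such that the block matrix `[[Y, A], [Aᴴ, Z]]` is
positive semidefinite; in particular this infimum is attained. -/
theorem schurNorm_sdp (n : ℕ) (hn : 0 < n) (A : Matrix (Fin n) (Fin n) ℂ) :
    IsLeast {c : ℝ | 0 ≤ c ∧ ∃ Y Z : Matrix (Fin n) (Fin n) ℂ,
        Y.IsHermitian ∧ Z.IsHermitian ∧
        (∀ j, Y j j = (c : ℂ)) ∧ (∀ j, Z j j = (c : ℂ)) ∧
        (Matrix.fromBlocks Y A A.conjTranspose Z).PosSemidef}
      (Matrix.schurNorm A) := by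
  constructor
  · refine ⟨schurNorm_nonneg A, ?_⟩
    obtain ⟨P, hP, hd, hA⟩ := schurNorm_mem_cone A
    set s := Matrix.schurNorm A with hs
    simp only at hd hA
    set Q := P + Matrix.diagonal (fun i => ((s - (P i i).re : ℝ) : ℂ)) with hQdef
    have hQ : Q.PosSemidef := hP.add (Matrix.PosSemidef.diagonal fun i => by
      have := hd i
      simp only [Pi.zero_apply]
      exact_mod_cast sub_nonneg.2 this)
    have hQd : ∀ i, Q i i = (s : ℂ) := by
      intro i
      have him : (P i i).im = 0 := by
        have := hP.isHermitian.apply i i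
        exact Complex.conj_eq_iff_im.1 this
      apply Complex.ext <;> simp [hQdef, him]
    have h12 : Q.toBlocks₁₂ = A := by
      ext i j
      simp [hQdef, Matrix.toBlocks₁₂, hA]
    have h21 : Q.toBlocks₂₁ = A.conjTranspose := by
      ext i j
      rw [← h12]
      simp only [Matrix.toBlocks₁₂, Matrix.toBlocks₂₁, Matrix.of_apply, Matrix.conjTranspose_apply]
      exact (hQ.isHermitian.apply _ _).symm
    refine ⟨Q.toBlocks₁₁, Q.toBlocks₂₂, ?_, ?_, fun j => hQd _, fun j => hQd _, ?_⟩
    · ext i j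
      exact hQ.isHermitian.apply _ _
    · ext i j
      exact hQ.isHermitian.apply _ _
    · rw [← h21]
      nth_rewrite 1 [← h12]
      rw [Matrix.fromBlocks_toBlocks]
      exact hQ
  · rintro c ⟨hc, Y, Z, -, -, hY, hZ, hP⟩
    refine schurNorm_le_of_feasible A hc _ hP ?_ (fun i j => rfl)
    rintro (i | i)
    · simp [hY]
    · simp [hZ]
end
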